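/- Trading submerged width into outer width (Corollary to the Snake Lemma). There are absolute constants C > 0 and c > 0 such that the following holds for every λ > 2, every irrational θ ∈ (0,1) of bounded type with Siegel linearization data H, and all disjoint closed arcs I, J ⊆ ∂Z together with a complementary arc L of ∂Z between I and J with total combinatorial length |I| + |L| + |J| ≤ 1/2: if K := W°_L(I, J) − W⁺(I, J) ≥ C·log λ, then there exists a closed arc I′ ⊆ L with W⁺_λ(I′) ≥ c·K. -/

import Mathlib

noncomputable section

open MeasureTheory Set Metric Bornology
open scoped ENNReal NNReal

/-- A curve: continuous on `[0,1]` and continuously differentiable on `(0,1)`. -/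
def IsCurve (γ : ℝ → ℂ) : Prop :=
  ContinuousOn γ (Icc 0 1) ∧ ContDiffOn ℝ 1 γ (Ioo 0 1)

/-- The extremal width of a family of curves: the infimum of `∫ ρ² dA` over all Borel
measurable metrics `ρ : ℂ → [0,∞]` that give every curve of the family length at least `1`
(the infimum over the empty set being `∞`). -/
def extremalWidth (F : Set (ℝ → ℂ)) : ℝ≥0∞ :=
  ⨅ ρ ∈ {ρ : ℂ → ℝ≥0∞ | Measurable ρ ∧
      ∀ γ ∈ F, 1 ≤ ∫⁻ t in Ioo (0:ℝ) 1, ρ (γ t) * (‖deriv γ t‖₊ : ℝ≥0∞)},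
    ∫⁻ z, ρ z ^ 2

/-- The curves contained in `S`, starting in `X` and ending in `Y`. -/
def curveFamily (S X Y : Set ℂ) : Set (ℝ → ℂ) :=
  {γ : ℝ → ℂ | IsCurve γ ∧ (∀ t ∈ Icc (0:ℝ) 1, γ t ∈ S) ∧ γ 0 ∈ X ∧ γ 1 ∈ Y}

/-- The extremal width `W_S(X, Y)`. -/
def widthIn (S X Y : Set ℂ) : ℝ≥0∞ := extremalWidth (curveFamily S X Y)

/-- The point `e^{2πit}` of the unit circle. -/
def unitCirc (t : ℝ) : ℂ := Complex.exp (2 * Real.pi * Complex.I * t)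

/-- The Gauss map `x ↦ {1/x}`. -/
def gaussMap (x : ℝ) : ℝ := Int.fract x⁻¹

/-- `partialQuot θ k` is the partial quotient `a_{k+1}` of `θ = [0; a₁, a₂, …]`. -/
def partialQuot (θ : ℝ) (k : ℕ) : ℕ := (⌊(gaussMap^[k] θ)⁻¹⌋).toNat

/-- Numerators `pₙ` of the convergents: `p₀ = 0`, `p₁ = 1`, `pₙ₊₁ = aₙ₊₁ pₙ + pₙ₋₁`. -/
def convP (θ : ℝ) : ℕ → ℤ
  | 0 => 0
  | 1 => 1
  | n + 2 => (partialQuot θ (n + 1) : ℤ) * convP θ (n + 1) + convP θ n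

/-- Denominators `qₙ` of the convergents: `q₀ = 1`, `q₁ = a₁`, `qₙ₊₁ = aₙ₊₁ qₙ + qₙ₋₁`. -/
def convQ (θ : ℝ) : ℕ → ℤ
  | 0 => 1
  | 1 => (partialQuot θ 0 : ℤ)
  | n + 2 => (partialQuot θ (n + 1) : ℤ) * convQ θ (n + 1) + convQ θ n

/-- `θₙ = qₙ·θ − pₙ`. -/
def thetaN (θ : ℝ) (n : ℕ) : ℝ := (convQ θ n : ℝ) * θ - (convP θ n : ℝ)

/-- `ℓₙ = |θₙ|`. -/
def ellN (θ : ℝ) (n : ℕ) : ℝ := |thetaN θ n|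

/-- `θ` is an irrational number in `(0,1)` of bounded type. -/
def BoundedType (θ : ℝ) : Prop :=
  Irrational θ ∧ θ ∈ Ioo (0:ℝ) 1 ∧ ∃ M : ℕ, ∀ k, partialQuot θ k ≤ M

/-- The quadratic polynomial `f_θ(z) = e^{2πiθ} z + z²`. -/
def fTheta (θ : ℝ) (z : ℂ) : ℂ := Complex.exp (2 * Real.pi * Complex.I * θ) * z + z ^ 2

/-- The filled Julia set of `f_θ`. -/
def filledJulia (θ : ℝ) : Set ℂ :=
  {z | IsBounded (Set.range fun n : ℕ => (fTheta θ)^[n] z)}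

/-- The Siegel disk of `f_θ`: the connected component of the interior of the filled
Julia set containing `0`. -/
def siegelDisk (θ : ℝ) : Set ℂ := connectedComponentIn (interior (filledJulia θ)) 0

/-- The boundary `∂Z` of the Siegel disk. -/
def bdryZ (θ : ℝ) : Set ℂ := closure (siegelDisk θ) \ siegelDisk θ

/-- Siegel linearization data for `f_θ`: a continuous injective map from the closed unit
disk onto the closure of the Siegel disk, biholomorphic from the open disk onto the Siegel
disk, conjugating the rigid rotation to `f_θ`. -/
structure SiegelData (θ : ℝ) where
  H : ℂ → ℂ
  contOn : ContinuousOn H (closedBall 0 1)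
  injOn : Set.InjOn H (closedBall 0 1)
  holo : DifferentiableOn ℂ H (ball 0 1)
  image_ball : H '' ball 0 1 = siegelDisk θ
  image_closedBall : H '' closedBall 0 1 = closure (siegelDisk θ)
  map_zero : H 0 = 0
  semiconj : ∀ w ∈ closedBall (0:ℂ) 1,
      H (Complex.exp (2 * Real.pi * Complex.I * θ) * w) = fTheta θ (H w)

/-- The closed arc `H({e^{2πit} : t ∈ [u, v]})` of `∂Z`. -/
def arcOn (θ : ℝ) (S : SiegelData θ) (u v : ℝ) : Set ℂ := S.H '' (unitCirc '' Icc u v)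

/-- The outer width `W⁺(X, Y) = W_{ℂ∖Z}(X, Y)`. -/
def wPlus (θ : ℝ) (X Y : Set ℂ) : ℝ≥0∞ := widthIn (siegelDisk θ)ᶜ X Y

/-- The family `ℱ°_L(I, J)`: curves landing on the outer side of `∂Z` at `γ(0) ∈ I` and at
`γ(1) ∈ J`, whose interior avoids `I ∪ J ∪ (∂Z ∖ (I ∪ L ∪ J))`. -/
def circFam (θ : ℝ) (I L J : Set ℂ) : Set (ℝ → ℂ) :=
  {γ : ℝ → ℂ | IsCurve γ ∧ γ 0 ∈ I ∧ γ 1 ∈ J ∧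
      (∃ ε > 0, ∀ t ∈ Ioo (0:ℝ) ε, γ t ∉ siegelDisk θ) ∧
      (∃ ε > 0, ∀ t ∈ Ioo (1 - ε) (1:ℝ), γ t ∉ siegelDisk θ) ∧
      ∀ t ∈ Ioo (0:ℝ) 1, γ t ∉ I ∪ J ∪ (bdryZ θ \ (I ∪ L ∪ J))}

/-- `W°_L(I, J)`. -/
def circWidth (θ : ℝ) (I L J : Set ℂ) : ℝ≥0∞ := extremalWidth (circFam θ I L J)

/-- The harmonic sum `a ⊕ b = (a⁻¹ + b⁻¹)⁻¹`. -/
def hsum (x y : ℝ≥0∞) : ℝ≥0∞ := (x⁻¹ + y⁻¹)⁻¹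

/-- The closed arc of `∂Z` with combinatorial center `H(e^{2πic})` and combinatorial
length `2r`. -/
def cArc (θ : ℝ) (S : SiegelData θ) (c r : ℝ) : Set ℂ :=
  S.H '' (unitCirc '' Icc (c - r) (c + r))

/-- `W⁺_λ(X)` for the arc `X` of center `c` and length `2r`: the outer width between `X`
and the closure of `∂Z ∖ λ·X`, where `λ·X` is the concentric arc of length
`min(λ·|X|, 1)`. -/
def wPlusLam (θ : ℝ) (S : SiegelData θ) (lam c r : ℝ) : ℝ≥0∞ :=
  widthIn (siegelDisk θ)ᶜ (cArc θ S c r)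
    (closure (bdryZ θ \ cArc θ S c (min (lam * (2 * r)) 1 / 2)))

/-!
Suppose that the outer widths `W⁺_λ` of all subarcs of `L` are at most `M`. Two families of curves
outside the disk whose endpoints are interlaced on the boundary cross each other, so one of them has
bounded width. Bisecting `L` about `log λ` times, one finds a middle subarc `N` of `L`, which leaves
out at least the fraction `λ⁻²` of `L` on both sides, such that the outer jumps over or into `N`
have width `O(M + log λ)`; the inner jumps have width `O(log λ)` by a logarithmic area estimate in
the unit disk. A curve which crosses `L` without making such jumps has to land in `N`, so it
contains two disjoint curves which cross the two components of `L ∖ N`. Repeating this on a binary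
tree of gaps with the metrics `max ρ (max (ρ_left / 2) (ρ_right / 2))`, half of the area is passed
on at each level, so the total area stays bounded. Hence the curves which dive below `L` have width
`O(M + log λ)`, while the others are counted in `W⁺(I, J)`.
-/

/-- A curve as in `IsCurve`, but parametrized by `[s, t]`. -/
def IsCurveOn (γ : ℝ → ℂ) (s t : ℝ) : Prop :=
  ContinuousOn γ (Icc s t) ∧ ContDiffOn ℝ 1 γ (Ioo s t)

/-- The length of `γ` over the parameters in `(s, t)` with respect to the metric `ρ |dz|`. -/
def metricLength (ρ : ℂ → ℝ≥0∞) (γ : ℝ → ℂ) (s t : ℝ) : ℝ≥0∞ :=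
  ∫⁻ x in Ioo s t, ρ (γ x) * ‖deriv γ x‖ₑ

/-- The area of the plane with respect to the metric `ρ |dz|`. -/
def metricArea (ρ : ℂ → ℝ≥0∞) : ℝ≥0∞ := ∫⁻ z, ρ z ^ 2

/-- `ρ` gives every curve of the family `F` length at least `1`, that is, `ρ` competes in the
infimum defining `extremalWidth F`. -/
def Admissible (ρ : ℂ → ℝ≥0∞) (F : Set (ℝ → ℂ)) : Prop :=
  ∀ γ ∈ F, 1 ≤ metricLength ρ γ 0 1

/-! ### Length and area -/

section Length

variable {ρ ρ' : ℂ → ℝ≥0∞} {γ : ℝ → ℂ} {s t s' t' τ τ' d : ℝ} {κ : ℝ≥0∞}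

lemma IsCurveOn.mono (h : IsCurveOn γ s t) (hs : s ≤ s') (ht : t' ≤ t) : IsCurveOn γ s' t' :=
  ⟨h.1.mono (Icc_subset_Icc hs ht), h.2.mono (Ioo_subset_Ioo hs ht)⟩

lemma IsCurveOn.hasDerivAt {x : ℝ} (h : IsCurveOn γ s t) (hx : x ∈ Ioo s t) :
    HasDerivAt γ (deriv γ x) x :=
  ((h.2.differentiableOn one_ne_zero x hx).differentiableAt (isOpen_Ioo.mem_nhds hx)).hasDerivAt

lemma metricLength_mono (hρ : ∀ z, ρ z ≤ ρ' z) : metricLength ρ γ s t ≤ metricLength ρ' γ s t :=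
  lintegral_mono fun _ => mul_le_mul_left (hρ _) _

lemma metricLength_mono_interval (hs : s ≤ s') (ht : t' ≤ t) :
    metricLength ρ γ s' t' ≤ metricLength ρ γ s t :=
  lintegral_mono_set (Ioo_subset_Ioo hs ht)

lemma metricLength_const_mul (hκ : κ ≠ ⊤) :
    metricLength (fun z => κ * ρ z) γ s t = κ * metricLength ρ γ s t := by
  simp only [metricLength, mul_assoc, lintegral_const_mul' _ _ hκ]

lemma mul_metricLength_add_mul_metricLength_le (a b : ℝ≥0∞) :
    a * metricLength ρ γ s t + b * metricLength ρ' γ s t ≤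
      metricLength (fun z => a * ρ z + b * ρ' z) γ s t :=
  (add_le_add (lintegral_const_mul_le _ _) (lintegral_const_mul_le _ _)).trans
    ((le_lintegral_add _ _).trans_eq (lintegral_congr fun x => by ring))

lemma metricLength_add_le {u : ℝ} (hst : s ≤ t) (htu : t ≤ u) :
    metricLength ρ γ s t + metricLength ρ γ t u ≤ metricLength ρ γ s u := by
  have hd : Disjoint (Ioo s t) (Ioo t u) :=
    disjoint_left.2 fun x hx hx' => lt_asymm hx.2 hx'.1
  rw [metricLength, metricLength, ← lintegral_union measurableSet_Ioo hd]
  exact lintegral_mono_set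
    (union_subset (Ioo_subset_Ioo_right htu) (Ioo_subset_Ioo_left hst))

lemma IsCurveOn.enorm_sub_le (h : IsCurveOn γ s t) (hst : s ≤ t) :
    ‖γ t - γ s‖ₑ ≤ ∫⁻ x in Ioo s t, ‖deriv γ x‖ₑ := by
  by_cases hfin : ∫⁻ x in Ioo s t, ‖deriv γ x‖ₑ = ⊤
  · exact hfin ▸ le_top
  have hint : IntegrableOn (deriv γ) (Ioo s t) :=
    ⟨(measurable_deriv γ).aestronglyMeasurable, lt_top_iff_ne_top.2 hfin⟩
  rw [← intervalIntegral.integral_eq_sub_of_hasDerivAt_of_le hst h.1 (fun x hx => h.hasDerivAt hx)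
      ((intervalIntegrable_iff_integrableOn_Ioo_of_le hst).2 hint),
    intervalIntegral.integral_of_le hst, integral_Ioc_eq_integral_Ioo]
  exact enorm_integral_le_lintegral_enorm _

lemma IsCurveOn.mul_le_metricLength (h : IsCurveOn γ s t) (hst : s ≤ t) (hd : d ≤ ‖γ t - γ s‖)
    (hκ : ∀ x ∈ Ioo s t, κ ≤ ρ (γ x)) : κ * ENNReal.ofReal d ≤ metricLength ρ γ s t :=
  calc κ * ENNReal.ofReal d ≤ κ * ∫⁻ x in Ioo s t, ‖deriv γ x‖ₑ := by
        gcongr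
        exact (ENNReal.ofReal_le_ofReal hd).trans (ofReal_norm (γ t - γ s) ▸ h.enorm_sub_le hst)
    _ ≤ ∫⁻ x in Ioo s t, κ * ‖deriv γ x‖ₑ := lintegral_const_mul_le _ _
    _ ≤ metricLength ρ γ s t :=
        setLIntegral_mono' measurableSet_Ioo fun x hx => mul_le_mul_left (hκ x hx) _

lemma metricLength_comp_mul_add {p q a b : ℝ} (hq : q ≠ 0)
    (himage : (fun x => q * x + p) '' Ioo a b = Ioo s t) :
    metricLength ρ (fun x => γ (q * x + p)) a b = metricLength ρ γ s t := by
  have hderiv (x : ℝ) : HasDerivAt (fun x => q * x + p) q x := by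
    simpa using ((hasDerivAt_id x).const_mul q).add_const p
  have hinj : InjOn (fun x : ℝ => q * x + p) (Ioo a b) := fun x _ y _ hxy =>
    mul_left_cancel₀ hq (add_right_cancel hxy)
  unfold metricLength
  rw [← himage, lintegral_image_eq_lintegral_abs_deriv_mul measurableSet_Ioo
    (fun x _ => (hderiv x).hasDerivWithinAt) hinj]
  refine lintegral_congr fun x => ?_
  have hγ : deriv (fun x => γ (q * x + p)) x = q • deriv γ (q * x + p) := by
    rw [deriv_comp_mul_left q (fun y => γ (y + p)) x, deriv_comp_add_const]
  rw [hγ, enorm_smul, Real.enorm_eq_ofReal_abs]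
  ring

lemma metricLength_reverse {a b : ℝ} :
    metricLength ρ (fun x => γ (s + t - x)) a b = metricLength ρ γ (s + t - b) (s + t - a) := by
  have himage : (fun x => -1 * x + (s + t)) '' Ioo a b = Ioo (s + t - b) (s + t - a) := by
    simpa [sub_eq_neg_add] using image_const_sub_Ioo (s + t) a b
  rw [← metricLength_comp_mul_add (neg_ne_zero.2 one_ne_zero) himage]
  simp only [neg_mul, one_mul, neg_add_eq_sub]

lemma IsCurveOn.comp {φ : ℝ → ℝ} {a b : ℝ} (h : IsCurveOn γ s t) (hφ : ContDiff ℝ 1 φ)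
    (hIcc : MapsTo φ (Icc a b) (Icc s t)) (hIoo : MapsTo φ (Ioo a b) (Ioo s t)) :
    IsCurveOn (fun x => γ (φ x)) a b :=
  ⟨h.1.comp hφ.continuous.continuousOn hIcc, ContDiffOn.comp h.2 hφ.contDiffOn hIoo⟩

lemma IsCurveOn.reverse (h : IsCurveOn γ s t) : IsCurveOn (fun x => γ (s + t - x)) s t :=
  h.comp (contDiff_const.sub contDiff_id)
    (fun x hx => ⟨by linarith [hx.2], by linarith [hx.1]⟩)
    (fun x hx => ⟨by linarith [hx.2], by linarith [hx.1]⟩)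

lemma IsCurveOn.rescale (h : IsCurveOn γ s t) (hst : s < t) :
    IsCurve fun x => γ ((t - s) * x + s) := by
  have hpos : 0 < t - s := sub_pos.2 hst
  refine h.comp (by fun_prop) ?_ ?_
  · exact mapsTo_iff_image_subset.2 (by simp [image_affine_Icc' hpos])
  · exact mapsTo_iff_image_subset.2 (by simp [image_affine_Ioo hpos])

lemma metricLength_rescale (hst : s < t) :
    metricLength ρ (fun x => γ ((t - s) * x + s)) 0 1 = metricLength ρ γ s t :=
  metricLength_comp_mul_add (sub_pos.2 hst).ne' (by simp [image_affine_Ioo (sub_pos.2 hst)])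

private lemma IsCurveOn.mul_le_metricLength_of_dist_of_le (h : IsCurveOn γ s t) (hτ : s ≤ τ)
    (hττ' : τ ≤ τ') (hτ' : τ' ≤ t) (hd : d ≤ ‖γ τ' - γ τ‖)
    (hκ : ∀ x ∈ Ioo s t, ‖γ x - γ τ‖ < d → κ ≤ ρ (γ x)) :
    κ * ENNReal.ofReal d ≤ metricLength ρ γ s t := by
  have hcont : ContinuousOn (fun x => ‖γ x - γ τ‖) (Icc τ τ') :=
    ((h.mono hτ hτ').1.sub continuousOn_const).norm
  obtain ⟨σ, ⟨⟨hτσ, hστ'⟩, hdσ⟩, hfirst⟩ := (isCompact_Icc.of_isClosed_subset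
    (hcont.preimage_isClosed_of_isClosed isClosed_Icc (isClosed_Ici (a := d)))
    inter_subset_left).exists_isLeast ⟨τ', ⟨hττ', le_rfl⟩, hd⟩
  refine ((h.mono hτ (hστ'.trans hτ')).mul_le_metricLength hτσ hdσ fun x hx => ?_).trans
    (metricLength_mono_interval hτ (hστ'.trans hτ'))
  refine hκ x ⟨hτ.trans_lt hx.1, hx.2.trans_le (hστ'.trans hτ')⟩ (not_le.1 fun hdx => ?_)
  exact hx.2.not_ge (hfirst ⟨⟨hx.1.le, hx.2.le.trans hστ'⟩, hdx⟩)

lemma IsCurveOn.mul_le_metricLength_of_dist (h : IsCurveOn γ s t) (hτ : τ ∈ Icc s t)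
    (hτ' : τ' ∈ Icc s t) (hd : d ≤ ‖γ τ' - γ τ‖)
    (hκ : ∀ x ∈ Ioo s t, ‖γ x - γ τ‖ < d → κ ≤ ρ (γ x)) :
    κ * ENNReal.ofReal d ≤ metricLength ρ γ s t := by
  rcases le_total τ τ' with hle | hle
  · exact h.mul_le_metricLength_of_dist_of_le hτ.1 hle hτ'.2 hd hκ
  have hlen : metricLength ρ (fun x => γ (s + t - x)) s t = metricLength ρ γ s t := by
    rw [metricLength_reverse, add_sub_cancel_right, add_sub_cancel_left]
  refine hlen ▸ h.reverse.mul_le_metricLength_of_dist_of_le (τ := s + t - τ) (τ' := s + t - τ')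
    (by linarith [hτ.2]) (by linarith) (by linarith [hτ'.1]) (by simpa using hd) fun x hx hxd => ?_
  exact hκ _ ⟨by linarith [hx.2], by linarith [hx.1]⟩ (by simpa using hxd)

lemma metricArea_max_le (hρ : Measurable ρ) :
    metricArea (fun z => max (ρ z) (ρ' z)) ≤ metricArea ρ + metricArea ρ' := by
  unfold metricArea
  rw [← lintegral_add_left (hρ.pow_const 2)]
  refine lintegral_mono fun z => ?_
  rcases le_total (ρ z) (ρ' z) with h | h
  · simpa only [max_eq_right h] using le_add_self
  · simpa only [max_eq_left h] using le_self_add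

lemma metricArea_const_mul (hκ : κ ≠ ⊤) :
    metricArea (fun z => κ * ρ z) = κ ^ 2 * metricArea ρ := by
  simp only [metricArea, mul_pow, lintegral_const_mul' _ _ (ENNReal.pow_ne_top hκ)]

lemma metricArea_indicator {A : Set ℂ} (hA : MeasurableSet A) :
    metricArea (A.indicator fun _ => κ) = κ ^ 2 * volume A := by
  have (z : ℂ) : A.indicator (fun _ => κ) z ^ 2 = A.indicator (fun _ => κ ^ 2) z := by
    by_cases h : z ∈ A <;> simp [h]
  simp only [metricArea, this, lintegral_indicator hA, setLIntegral_const]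

end Length

lemma volume_ball_eq_ofReal (p : ℂ) {r : ℝ} (hr : 0 ≤ r) :
    volume (ball p r) = ENNReal.ofReal (Real.pi * r ^ 2) := by
  rw [Complex.volume_ball, ENNReal.ofReal_mul Real.pi_pos.le, ENNReal.ofReal_pow hr, mul_comm,
    ← NNReal.coe_real_pi, ENNReal.ofReal_coe_nnreal]

/-! ### Extremal width -/

section Width

variable {F G : Set (ℝ → ℂ)} {ρ : ℂ → ℝ≥0∞}

lemma extremalWidth_le_metricArea (hρ : Measurable ρ) (hF : Admissible ρ F) :
    extremalWidth F ≤ metricArea ρ :=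
  iInf₂_le ρ ⟨hρ, hF⟩

lemma exists_metric_of_extremalWidth_lt {b : ℝ≥0∞} (h : extremalWidth F < b) :
    ∃ ρ : ℂ → ℝ≥0∞, Measurable ρ ∧ Admissible ρ F ∧ metricArea ρ < b := by
  simp only [extremalWidth, iInf_lt_iff] at h
  obtain ⟨ρ, ⟨hρ, hF⟩, harea⟩ := h
  exact ⟨ρ, hρ, hF, harea⟩

lemma extremalWidth_mono (h : F ⊆ G) : extremalWidth F ≤ extremalWidth G :=
  le_iInf₂ fun _ hρ => extremalWidth_le_metricArea hρ.1 fun γ hγ => hρ.2 γ (h hγ)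

lemma extremalWidth_le_of_reverse (h : ∀ γ ∈ F, (fun x => γ (1 - x)) ∈ G) :
    extremalWidth F ≤ extremalWidth G := by
  refine le_iInf₂ fun ρ hρ => extremalWidth_le_metricArea hρ.1 fun γ hγ => ?_
  have : metricLength ρ (fun x => γ (1 - x)) 0 1 = metricLength ρ γ 0 1 := by
    simpa using metricLength_reverse (ρ := ρ) (γ := γ) (s := 0) (t := 1) (a := 0) (b := 1)
  exact this ▸ hρ.2 _ (h γ hγ)

lemma extremalWidth_le_add {G' : Set (ℝ → ℂ)} (h : F ⊆ G ∪ G') :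
    extremalWidth F ≤ extremalWidth G + extremalWidth G' := by
  conv_rhs => unfold extremalWidth
  simp only [ENNReal.iInf_add, ENNReal.add_iInf]
  refine le_iInf₂ fun ρ' hρ' => le_iInf₂ fun ρ hρ =>
    (extremalWidth_le_metricArea (hρ.1.max hρ'.1) fun γ hγ => ?_).trans (metricArea_max_le hρ.1)
  rcases h hγ with hG | hG
  · exact (hρ.2 γ hG).trans (metricLength_mono fun _ => le_max_left _ _)
  · exact (hρ'.2 γ hG).trans (metricLength_mono fun _ => le_max_right _ _)

lemma extremalWidth_le_of_dist {p : ℂ} {R δ : ℝ} (hR : 0 ≤ R) (hδ : 0 < δ)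
    (h : ∀ γ ∈ F, IsCurve γ ∧ γ 0 ∈ closedBall p R ∧ ∃ τ ∈ Icc (0 : ℝ) 1, δ ≤ ‖γ τ - γ 0‖) :
    extremalWidth F ≤ ENNReal.ofReal (Real.pi * ((R + δ) / δ) ^ 2) := by
  set κ : ℝ≥0∞ := ENNReal.ofReal δ⁻¹
  have hκ : κ * ENNReal.ofReal δ = 1 := by
    rw [← ENNReal.ofReal_mul (inv_pos.2 hδ).le, inv_mul_cancel₀ hδ.ne', ENNReal.ofReal_one]
  have hadm : Admissible ((ball p (R + δ)).indicator fun _ => κ) F := fun γ hγ => by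
    obtain ⟨hcurve, hp, τ, hτ, hdist⟩ := h γ hγ
    rw [← hκ]
    refine IsCurveOn.mul_le_metricLength_of_dist hcurve (left_mem_Icc.2 zero_le_one) hτ hdist
      fun x _ hx => ?_
    rw [indicator_of_mem]
    rw [← dist_eq_norm] at hx
    rw [mem_ball]
    linarith [dist_triangle (γ x) (γ 0) p, mem_closedBall.1 hp]
  refine (extremalWidth_le_metricArea (measurable_const.indicator measurableSet_ball) hadm).trans_eq
    ?_
  rw [metricArea_indicator measurableSet_ball, volume_ball_eq_ofReal p (by positivity),
    ← ENNReal.ofReal_pow (by positivity), ← ENNReal.ofReal_mul (by positivity)]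
  congr 1
  field_simp

end Width

/-! ### Injective holomorphic maps -/

section Conformal

open Filter Topology

variable {U : Set ℂ} {f g : ℂ → ℂ} {w : ℂ}

lemma not_eventually_eq_of_injOn (hU : IsOpen U) (hinj : InjOn f U) (hw : w ∈ U) :
    ¬ ∀ᶠ z in 𝓝 w, f z = f w := fun h => by
  have hne : ∀ᶠ _ in 𝓝[≠] w, False := by
    filter_upwards [self_mem_nhdsWithin, nhdsWithin_le_nhds h,
      nhdsWithin_le_nhds (hU.mem_nhds hw)] with z hzw hfz hz
    exact hzw (hinj hz hw hfz)
  exact (eventually_false_iff_eq_bot.1 hne ▸ (inferInstance : NeBot (𝓝[≠] w))).ne rfl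

lemma nhds_le_map_nhds_of_injOn (hU : IsOpen U) (hf : DifferentiableOn ℂ f U) (hinj : InjOn f U)
    (hw : w ∈ U) : 𝓝 (f w) ≤ map f (𝓝 w) :=
  ((hf.analyticAt (hU.mem_nhds hw)).eventually_constant_or_nhds_le_map_nhds).resolve_left
    (not_eventually_eq_of_injOn hU hinj hw)

lemma isOpen_image_of_injOn (hU : IsOpen U) (hf : DifferentiableOn ℂ f U) (hinj : InjOn f U) :
    IsOpen (f '' U) :=
  isOpen_iff_mem_nhds.2 <| forall_mem_image.2 fun _ hw =>
    nhds_le_map_nhds_of_injOn hU hf hinj hw (image_mem_map (hU.mem_nhds hw))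

lemma tendsto_leftInvOn (hU : IsOpen U) (hf : DifferentiableOn ℂ f U) (hg : LeftInvOn g f U)
    (hw : w ∈ U) : Tendsto g (𝓝 (f w)) (𝓝 w) := by
  have : Tendsto (g ∘ f) (𝓝 w) (𝓝 w) :=
    tendsto_id.congr' (eventually_of_mem (hU.mem_nhds hw) fun z hz => (hg hz).symm)
  exact (map_mono (nhds_le_map_nhds_of_injOn hU hf hg.injOn hw)).trans this

lemma differentiableAt_leftInvOn_of_deriv_ne_zero (hU : IsOpen U) (hf : DifferentiableOn ℂ f U)
    (hg : LeftInvOn g f U) (hw : w ∈ U) (hne : deriv f w ≠ 0) : DifferentiableAt ℂ g (f w) := by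
  have hderiv : HasDerivAt f (deriv f w) (g (f w)) := by
    rw [hg hw]
    exact (hf.differentiableAt (hU.mem_nhds hw)).hasDerivAt
  have hcont : ContinuousAt g (f w) := by
    simpa only [ContinuousAt, hg hw] using tendsto_leftInvOn hU hf hg hw
  refine (hderiv.of_local_left_inverse hcont hne ?_).differentiableAt
  filter_upwards [(isOpen_image_of_injOn hU hf hg.injOn).mem_nhds (mem_image_of_mem f hw)]
  rintro _ ⟨z, hz, rfl⟩
  rw [hg hz]

lemma eventually_deriv_ne_zero_of_injOn (hU : IsOpen U) (hf : DifferentiableOn ℂ f U)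
    (hinj : InjOn f U) (hw : w ∈ U) : ∀ᶠ z in 𝓝[≠] w, deriv f z ≠ 0 := by
  refine ((hf.analyticAt (hU.mem_nhds hw)).deriv.eventually_eq_zero_or_eventually_ne_zero
    ).resolve_left fun h => not_eventually_eq_of_injOn hU hinj hw ?_
  obtain ⟨ε, hε, hball⟩ := Metric.eventually_nhds_iff_ball.1 (h.and (hU.mem_nhds hw))
  filter_upwards [ball_mem_nhds w hε] with z hz
  exact isOpen_ball.is_const_of_deriv_eq_zero (convex_ball w ε).isPreconnected
    (hf.mono fun y hy => (hball y hy).2) (fun y hy => (hball y hy).1) hz (mem_ball_self hε)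

/-- A left inverse of `f` is differentiable off the isolated critical values of `f`, hence
everywhere by Riemann's removable singularity theorem. -/
lemma differentiableAt_leftInvOn (hU : IsOpen U) (hf : DifferentiableOn ℂ f U)
    (hg : LeftInvOn g f U) (hw : w ∈ U) : DifferentiableAt ℂ g (f w) := by
  have hcont : ContinuousAt g (f w) := by
    simpa only [ContinuousAt, hg hw] using tendsto_leftInvOn hU hf hg hw
  refine (Complex.analyticAt_of_differentiable_on_punctured_nhds_of_continuousAt ?_
    hcont).differentiableAt
  have hne := eventually_deriv_ne_zero_of_injOn hU hf hg.injOn hw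
  rw [eventually_nhdsWithin_iff] at hne ⊢
  filter_upwards [(tendsto_leftInvOn hU hf hg hw).eventually hne,
    (isOpen_image_of_injOn hU hf hg.injOn).mem_nhds (mem_image_of_mem f hw)]
  rintro _ hz ⟨z, hzU, rfl⟩ hzw
  rw [hg hzU] at hz
  exact differentiableAt_leftInvOn_of_deriv_ne_zero hU hf hg hzU
    (hz fun h => hzw (congrArg f h))

lemma deriv_ne_zero_of_injOn (hU : IsOpen U) (hf : DifferentiableOn ℂ f U) (hinj : InjOn f U)
    (hw : w ∈ U) : deriv f w ≠ 0 := fun h => by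
  have hg : LeftInvOn (Function.invFunOn f U) f U := hinj.leftInvOn_invFunOn
  have hid : HasDerivAt (Function.invFunOn f U ∘ f) 1 w :=
    (hasDerivAt_id w).congr_of_eventuallyEq (eventually_of_mem (hU.mem_nhds hw) hg)
  have hcomp := (differentiableAt_leftInvOn hU hf hg hw).hasDerivAt.comp w
    (hf.differentiableAt (hU.mem_nhds hw)).hasDerivAt
  simpa [h] using hcomp.unique hid

lemma abs_det_smul_one (c : ℂ) : |(c • (1 : ℂ →L[ℝ] ℂ)).det| = ‖c‖ ^ 2 := by
  have : ((c • (1 : ℂ →L[ℝ] ℂ) : ℂ →L[ℝ] ℂ) : ℂ →ₗ[ℝ] ℂ) = Algebra.lmul ℝ ℂ c := by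
    ext
    simp
  rw [ContinuousLinearMap.det, this, ← Algebra.norm_apply, Algebra.norm_complex_eq]
  simp [Complex.normSq_eq_norm_sq]

lemma metricArea_pullback_le (hU : IsOpen U) (hf : DifferentiableOn ℂ f U) (hinj : InjOn f U)
    (ρ : ℂ → ℝ≥0∞) :
    metricArea (U.indicator fun z => ρ (f z) * ‖deriv f z‖ₑ) ≤ metricArea ρ := by
  have hsq (z : ℂ) : U.indicator (fun z => ρ (f z) * ‖deriv f z‖ₑ) z ^ 2 =
      U.indicator (fun z =>
        ENNReal.ofReal |(deriv f z • (1 : ℂ →L[ℝ] ℂ)).det| * ρ (f z) ^ 2) z := by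
    by_cases hz : z ∈ U
    · simp only [indicator_of_mem hz, abs_det_smul_one, ENNReal.ofReal_pow (norm_nonneg _),
        ofReal_norm, mul_pow, mul_comm]
    · simp [hz]
  have hderiv (z : ℂ) (hz : z ∈ U) :
      HasFDerivWithinAt f (deriv f z • (1 : ℂ →L[ℝ] ℂ)) U z :=
    (hf.differentiableAt (hU.mem_nhds hz)).hasDerivAt.complexToReal_fderiv.hasFDerivWithinAt
  simp only [metricArea, hsq, lintegral_indicator hU.measurableSet]
  rw [← lintegral_image_eq_lintegral_abs_det_fderiv_mul volume hU.measurableSet hderiv hinj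
    fun z => ρ z ^ 2]
  exact setLIntegral_le_lintegral _ _

lemma measurable_pullback (hU : IsOpen U) (hf : DifferentiableOn ℂ f U) {ρ : ℂ → ℝ≥0∞}
    (hρ : Measurable ρ) : Measurable (U.indicator fun z => ρ (f z) * ‖deriv f z‖ₑ) := by
  classical
  have hpiece : Measurable (U.piecewise f 0) :=
    hf.continuousOn.measurable_piecewise continuousOn_const hU.measurableSet
  have : (U.indicator fun z => ρ (f z) * ‖deriv f z‖ₑ) =
      U.indicator fun z => ρ (U.piecewise f 0 z) * ‖deriv f z‖ₑ :=
    indicator_congr fun z hz => by rw [piecewise_eq_of_mem _ _ _ hz]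
  rw [this]
  exact ((hρ.comp hpiece).mul (measurable_deriv f).enorm).indicator hU.measurableSet

lemma extremalWidth_le_of_conformal {F G : Set (ℝ → ℂ)} (hU : IsOpen U)
    (hf : DifferentiableOn ℂ f U) (hinj : InjOn f U)
    (h : ∀ γ ∈ F, IsCurve γ ∧ (∀ x ∈ Ioo (0 : ℝ) 1, γ x ∈ U) ∧ (fun x => f (γ x)) ∈ G) :
    extremalWidth F ≤ extremalWidth G := by
  refine le_iInf₂ fun ρ hρ => (extremalWidth_le_metricArea (measurable_pullback hU hf hρ.1)
    fun γ hγ => ?_).trans (metricArea_pullback_le hU hf hinj ρ)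
  obtain ⟨hcurve, hmem, hG⟩ := h γ hγ
  refine (hρ.2 _ hG).trans_eq (setLIntegral_congr_fun measurableSet_Ioo fun x hx => ?_)
  have hderiv : deriv (fun x => f (γ x)) x = deriv f (γ x) * deriv γ x :=
    ((hf.differentiableAt (hU.mem_nhds (hmem x hx))).hasDerivAt.comp_of_eq x
      (IsCurveOn.hasDerivAt hcurve hx) rfl).deriv
  simp only [indicator_of_mem (hmem x hx), hderiv, mul_assoc]
  rw [← enorm_mul]
  rfl

end Conformal

/-! ### Points of the unit circle -/

section UnitCircle

variable {α β : ℝ}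

lemma norm_unitCirc (α : ℝ) : ‖unitCirc α‖ = 1 := by
  simp [unitCirc, Complex.norm_exp]

lemma unitCirc_mem_sphere (α : ℝ) : unitCirc α ∈ sphere (0 : ℂ) 1 := by simp [norm_unitCirc]

lemma unitCirc_mem_closedBall (α : ℝ) : unitCirc α ∈ closedBall (0 : ℂ) 1 :=
  sphere_subset_closedBall (unitCirc_mem_sphere α)

lemma continuous_unitCirc : Continuous unitCirc := by
  unfold unitCirc
  fun_prop

lemma unitCirc_sub_eq (α β : ℝ) :
    unitCirc α - unitCirc β =
      2 * Complex.I * Complex.exp ((Real.pi * (α + β) : ℝ) * Complex.I) *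
        (Real.sin (Real.pi * (α - β)) : ℝ) := by
  have hα : 2 * (Real.pi : ℂ) * Complex.I * α =
      Real.pi * (α + β) * Complex.I + Real.pi * (α - β) * Complex.I := by ring
  have hβ : 2 * (Real.pi : ℂ) * Complex.I * β =
      Real.pi * (α + β) * Complex.I + -(Real.pi * (α - β)) * Complex.I := by ring
  unfold unitCirc
  push_cast
  rw [Complex.sin, hα, hβ, Complex.exp_add, Complex.exp_add]
  linear_combination (-Complex.exp (Real.pi * (α + β) * Complex.I) *
    (Complex.exp (-(Real.pi * (α - β)) * Complex.I) -
      Complex.exp (Real.pi * (α - β) * Complex.I))) * Complex.I_sq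

lemma norm_unitCirc_sub (α β : ℝ) :
    ‖unitCirc α - unitCirc β‖ = 2 * |Real.sin (Real.pi * (α - β))| := by
  rw [unitCirc_sub_eq, norm_mul, norm_mul, Complex.norm_exp_ofReal_mul_I, Complex.norm_real,
    Real.norm_eq_abs]
  simp

lemma norm_unitCirc_sub_le (α β : ℝ) : ‖unitCirc α - unitCirc β‖ ≤ 2 * Real.pi * |α - β| := by
  have h : |Real.sin (Real.pi * (α - β))| ≤ Real.pi * |α - β| := by
    simpa [abs_mul, abs_of_pos Real.pi_pos] using Real.abs_sin_le_abs (x := Real.pi * (α - β))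
  rw [norm_unitCirc_sub]
  linarith

lemma le_norm_unitCirc_sub (h : |α - β| ≤ 1 / 2) : 4 * |α - β| ≤ ‖unitCirc α - unitCirc β‖ := by
  have hsin : 2 * |α - β| ≤ Real.sin (Real.pi * |α - β|) := by
    have := Real.mul_le_sin (x := Real.pi * |α - β|) (by positivity) (by nlinarith [Real.pi_pos])
    rwa [← mul_assoc, div_mul_cancel₀ _ Real.pi_ne_zero] at this
  have habs : |Real.sin (Real.pi * (α - β))| = |Real.sin (Real.pi * |α - β|)| := by
    rcases abs_choice (α - β) with h | h <;> rw [h]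
    rw [mul_neg, Real.sin_neg, abs_neg]
  rw [norm_unitCirc_sub, habs]
  linarith [le_abs_self (Real.sin (Real.pi * |α - β|))]

lemma eq_of_unitCirc_eq (h : |α - β| < 1) (he : unitCirc α = unitCirc β) : α = β := by
  have hsin : Real.sin (Real.pi * (α - β)) = 0 := by
    simpa [he] using (norm_unitCirc_sub α β).symm
  rw [Real.sin_eq_zero_iff_of_lt_of_lt (by nlinarith [(abs_lt.1 h).1, Real.pi_pos])
    (by nlinarith [(abs_lt.1 h).2, Real.pi_pos])] at hsin
  exact sub_eq_zero.1 ((mul_eq_zero.1 hsin).resolve_left Real.pi_ne_zero)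

end UnitCircle

/-! ### Closed conformal disks -/

/-- `H` parametrizes a closed topological disk by the closed unit disk, conformally on the open
unit disk. For Siegel disks this is all that is used about the linearization. -/
structure ConformalDisk (H : ℂ → ℂ) : Prop where
  continuousOn : ContinuousOn H (closedBall 0 1)
  injOn : InjOn H (closedBall 0 1)
  differentiableOn : DifferentiableOn ℂ H (ball 0 1)

/-- The open disk parametrized by `H`. -/
def diskImage (H : ℂ → ℂ) : Set ℂ := H '' ball 0 1

/-- The boundary curve of the disk parametrized by `H`. -/
def diskBdry (H : ℂ → ℂ) : Set ℂ := H '' sphere 0 1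

/-- The boundary point with combinatorial coordinate `α`, which counts modulo `1`. -/
def bdryPt (H : ℂ → ℂ) (α : ℝ) : ℂ := H (unitCirc α)

/-- The closed boundary arc with combinatorial coordinates in `[u, v]`. -/
def bdryArc (H : ℂ → ℂ) (u v : ℝ) : Set ℂ := H '' (unitCirc '' Icc u v)

/-- The inverse of the parametrization of the closed disk; a junk value off the closed disk. -/
def diskInv (H : ℂ → ℂ) : ℂ → ℂ := Function.invFunOn H (closedBall 0 1)

section Disk

variable {H : ℂ → ℂ} {α β u v u' v' : ℝ} {z w : ℂ} {γ : ℝ → ℂ} {s t : ℝ}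

lemma image_closedBall_eq_union : H '' closedBall 0 1 = diskImage H ∪ diskBdry H := by
  rw [diskImage, diskBdry, ← image_union, ball_union_sphere]

lemma bdryPt_mem_diskBdry (α : ℝ) : bdryPt H α ∈ diskBdry H :=
  mem_image_of_mem H (unitCirc_mem_sphere α)

lemma bdryArc_eq_image : bdryArc H u v = bdryPt H '' Icc u v := image_image H unitCirc _

lemma bdryArc_mono (hu : u' ≤ u) (hv : v ≤ v') : bdryArc H u v ⊆ bdryArc H u' v' :=
  image_mono (image_mono (Icc_subset_Icc hu hv))

lemma bdryPt_mem_bdryArc (hα : α ∈ Icc u v) : bdryPt H α ∈ bdryArc H u v :=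
  mem_image_of_mem H (mem_image_of_mem unitCirc hα)

lemma bdryArc_subset_diskBdry : bdryArc H u v ⊆ diskBdry H := by
  rw [bdryArc_eq_image]
  exact image_subset_iff.2 fun α _ => bdryPt_mem_diskBdry α

lemma diskInv_mem_closedBall (hz : z ∈ H '' closedBall 0 1) : diskInv H z ∈ closedBall (0 : ℂ) 1 :=
  Function.invFunOn_mem hz

lemma apply_diskInv (hz : z ∈ H '' closedBall 0 1) : H (diskInv H z) = z :=
  Function.invFunOn_eq hz

lemma injOn_diskInv : InjOn (diskInv H) (H '' closedBall 0 1) :=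
  fun z hz z' hz' he => by rw [← apply_diskInv hz, he, apply_diskInv hz']

namespace ConformalDisk

lemma isCompact_image_closedBall (h : ConformalDisk H) : IsCompact (H '' closedBall 0 1) :=
  (isCompact_closedBall 0 1).image_of_continuousOn h.continuousOn

lemma isCompact_diskBdry (h : ConformalDisk H) : IsCompact (diskBdry H) :=
  (isCompact_sphere 0 1).image_of_continuousOn (h.continuousOn.mono sphere_subset_closedBall)

lemma isOpen_diskImage (h : ConformalDisk H) : IsOpen (diskImage H) :=
  isOpen_image_of_injOn isOpen_ball h.differentiableOn (h.injOn.mono ball_subset_closedBall)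

lemma notMem_diskImage (h : ConformalDisk H) (hz : z ∈ diskBdry H) : z ∉ diskImage H := by
  obtain ⟨w, hw, rfl⟩ := hz
  rintro ⟨w', hw', he⟩
  obtain rfl := h.injOn (ball_subset_closedBall hw') (sphere_subset_closedBall hw) he
  exact (mem_ball.1 hw').ne hw

lemma continuous_bdryPt (h : ConformalDisk H) : Continuous (bdryPt H) :=
  h.continuousOn.comp_continuous continuous_unitCirc unitCirc_mem_closedBall

lemma eq_of_bdryPt_eq (h : ConformalDisk H) (hlt : |α - β| < 1) (he : bdryPt H α = bdryPt H β) :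
    α = β :=
  eq_of_unitCirc_eq hlt
    (h.injOn (unitCirc_mem_closedBall α) (unitCirc_mem_closedBall β) he)

lemma isCompact_bdryArc (h : ConformalDisk H) (u v : ℝ) : IsCompact (bdryArc H u v) := by
  rw [bdryArc_eq_image]
  exact isCompact_Icc.image h.continuous_bdryPt

lemma bdryPt_mem_bdryArc_iff (h : ConformalDisk H) (hv : v < α + 1) (hu : α < u + 1) :
    bdryPt H α ∈ bdryArc H u v ↔ α ∈ Icc u v := by
  refine ⟨fun hα => ?_, bdryPt_mem_bdryArc⟩
  rw [bdryArc_eq_image] at hα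
  obtain ⟨β, hβ, he⟩ := hα
  obtain rfl : β = α :=
    h.eq_of_bdryPt_eq (abs_lt.2 ⟨by linarith [hβ.1], by linarith [hβ.2]⟩) he
  exact hβ

lemma disjoint_bdryArc (h : ConformalDisk H) (hlt : v < u') (hlt' : v' < u + 1) :
    Disjoint (bdryArc H u v) (bdryArc H u' v') := by
  rw [disjoint_left, bdryArc_eq_image, forall_mem_image]
  intro α hα hα'
  rcases lt_or_ge α u' with hαu | hαu
  · rw [h.bdryPt_mem_bdryArc_iff (by linarith [hα.1]) (by linarith)] at hα'
    exact hαu.not_ge hα'.1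
  · linarith [hα.2]

lemma forall_mem_or_forall_notMem_diskImage (h : ConformalDisk H)
    (hc : ContinuousOn γ (Ioo s t)) (hγ : ∀ x ∈ Ioo s t, γ x ∉ diskBdry H) :
    (∀ x ∈ Ioo s t, γ x ∈ diskImage H) ∨ ∀ x ∈ Ioo s t, γ x ∉ diskImage H := by
  have hopen : IsOpen (diskImage H ∪ diskBdry H)ᶜ := by
    rw [← image_closedBall_eq_union]
    exact h.isCompact_image_closedBall.isClosed.isOpen_compl
  have hcases := (isPreconnected_Ioo.image γ hc).subset_or_subset h.isOpen_diskImage hopen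
    (disjoint_left.2 fun z hz hz' => hz' (Or.inl hz))
    (by
      rintro _ ⟨x, hx, rfl⟩
      by_cases hz : γ x ∈ diskImage H
      · exact Or.inl hz
      · exact Or.inr fun hz' => hz'.elim hz (hγ x hx))
  exact hcases.imp (fun hsub x hx => hsub (mem_image_of_mem γ hx))
    fun hsub x hx hz => hsub (mem_image_of_mem γ hx) (Or.inl hz)

lemma diskInv_apply (h : ConformalDisk H) (hw : w ∈ closedBall (0 : ℂ) 1) :
    diskInv H (H w) = w :=
  h.injOn.leftInvOn_invFunOn hw

lemma diskInv_bdryPt (h : ConformalDisk H) (α : ℝ) : diskInv H (bdryPt H α) = unitCirc α :=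
  h.diskInv_apply (unitCirc_mem_closedBall α)

lemma continuousOn_diskInv (h : ConformalDisk H) :
    ContinuousOn (diskInv H) (H '' closedBall 0 1) := by
  refine continuousOn_iff_isClosed.2 fun t ht => ⟨H '' (closedBall 0 1 ∩ t), ?_, ?_⟩
  · exact (((isCompact_closedBall 0 1).inter_right ht).image_of_continuousOn
      (h.continuousOn.mono inter_subset_left)).isClosed
  · ext z
    constructor
    · rintro ⟨hzt, hz⟩
      exact ⟨⟨diskInv H z, ⟨diskInv_mem_closedBall hz, hzt⟩, apply_diskInv hz⟩, hz⟩
    · rintro ⟨⟨w, ⟨hw, hwt⟩, rfl⟩, hz⟩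
      exact ⟨by rwa [mem_preimage, h.diskInv_apply hw], hz⟩

lemma differentiableOn_diskInv (h : ConformalDisk H) :
    DifferentiableOn ℂ (diskInv H) (diskImage H) := by
  rintro _ ⟨w, hw, rfl⟩
  exact (differentiableAt_leftInvOn isOpen_ball h.differentiableOn
    (fun w hw => h.diskInv_apply (ball_subset_closedBall hw)) hw).differentiableWithinAt

lemma isCurveOn_diskInv (h : ConformalDisk H) (hγ : IsCurveOn γ s t)
    (hZ : ∀ x ∈ Ioo s t, γ x ∈ diskImage H) (hcl : ∀ x ∈ Icc s t, γ x ∈ H '' closedBall 0 1) :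
    IsCurveOn (fun x => diskInv H (γ x)) s t :=
  ⟨h.continuousOn_diskInv.comp hγ.1 hcl,
    ((h.differentiableOn_diskInv.contDiffOn h.isOpen_diskImage).restrict_scalars ℝ).comp hγ.2 hZ⟩

end ConformalDisk

end Disk

/-! ### Increments of the logarithm and the crossing lemma -/

section LogIncrement

variable {f g : ℝ → ℂ} {F G : ℝ → ℝ → ℂ}

lemma exists_continuous_exp_eq {X : Type*} [TopologicalSpace X] [SimplyConnectedSpace X]
    [LocallyPathConnectedSpace X] {f : X → ℂ} (hf : Continuous f) (h0 : ∀ x, f x ≠ 0) :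
    ∃ L : X → ℂ, Continuous L ∧ ∀ x, Complex.exp (L x) = f x := by
  have x₀ : X := Classical.arbitrary X
  obtain ⟨L, ⟨-, hL⟩, -⟩ := Complex.isCoveringMapOn_exp.existsUnique_continuousMap_lifts
    (⟨f, hf⟩ : C(X, ℂ)) (a₀ := x₀) (Complex.exp_log (h0 x₀)) h0
  exact ⟨L, map_continuous L, congrFun hL⟩

lemma sub_eq_sub_of_exp_eq {X : Type*} [TopologicalSpace X] [SimplyConnectedSpace X]
    [LocallyPathConnectedSpace X] {L M : X → ℂ} (hL : Continuous L) (hM : Continuous M)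
    (h : ∀ x, Complex.exp (L x) = Complex.exp (M x)) (x y : X) : L y - L x = M y - M x := by
  have huniq := (Complex.isCoveringMapOn_exp.existsUnique_continuousMap_lifts
    (⟨fun z => Complex.exp (L z), by fun_prop⟩ : C(X, ℂ)) (a₀ := x) (e₀ := L x) rfl
    fun z => Complex.exp_ne_zero (L z)).unique
    (y₁ := ⟨L, hL⟩) (y₂ := ⟨fun z => M z + (L x - M x), by fun_prop⟩) ⟨rfl, rfl⟩
    ⟨by simp, funext fun z => by simp [Complex.exp_add, Complex.exp_sub, h]⟩
  have hy := DFunLike.congr_fun huniq y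
  simp only [ContinuousMap.coe_mk] at hy
  linear_combination hy

open Classical in
/-- The increment over `[0, 1]` of a continuous logarithm of `f`; `0` if `f` has none. -/
def logIncrement (f : ℝ → ℂ) : ℂ :=
  if h : ∃ L : ℝ → ℂ, Continuous L ∧ ∀ x, Complex.exp (L x) = f x then
    h.choose 1 - h.choose 0 else 0

lemma logIncrement_eq {L : ℝ → ℂ} (hL : Continuous L) (he : ∀ x, Complex.exp (L x) = f x) :
    logIncrement f = L 1 - L 0 := by
  have h : ∃ L : ℝ → ℂ, Continuous L ∧ ∀ x, Complex.exp (L x) = f x := ⟨L, hL, he⟩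
  rw [logIncrement, dif_pos h]
  exact sub_eq_sub_of_exp_eq h.choose_spec.1 hL
    (fun x => by rw [h.choose_spec.2 x, he x]) 0 1

lemma logIncrement_mul (hf : Continuous f) (hg : Continuous g) (hf0 : ∀ x, f x ≠ 0)
    (hg0 : ∀ x, g x ≠ 0) :
    logIncrement (fun x => f x * g x) = logIncrement f + logIncrement g := by
  obtain ⟨L, hL, hLe⟩ := exists_continuous_exp_eq hf hf0
  obtain ⟨M, hM, hMe⟩ := exists_continuous_exp_eq hg hg0
  rw [logIncrement_eq hL hLe, logIncrement_eq hM hMe,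
    logIncrement_eq (L := fun x => L x + M x) (hL.add hM)
      fun x => by rw [Complex.exp_add, hLe, hMe]]
  ring

/-- The increment of `log F` along the boundary of the unit square, so `2πi` times the number of
zeros of `F` in the square, counted with sign. -/
def boundaryIncrement (F : ℝ → ℝ → ℂ) : ℂ :=
  logIncrement (fun s => F s 0) + logIncrement (F 1) - logIncrement (F 0) -
    logIncrement fun s => F s 1

lemma boundaryIncrement_eq_zero (hF : Continuous F.uncurry) (h0 : ∀ s t, F s t ≠ 0) :
    boundaryIncrement F = 0 := by
  obtain ⟨L, hL, hLe⟩ := exists_continuous_exp_eq hF fun x => h0 x.1 x.2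
  have hLe' : ∀ s t, Complex.exp (L (s, t)) = F s t := fun s t => hLe (s, t)
  rw [boundaryIncrement,
    logIncrement_eq (f := fun s => F s 0) (L := fun s => L (s, 0)) (by fun_prop) (hLe' · 0),
    logIncrement_eq (L := fun t => L (1, t)) (by fun_prop) (hLe' 1),
    logIncrement_eq (L := fun t => L (0, t)) (by fun_prop) (hLe' 0),
    logIncrement_eq (f := fun s => F s 1) (L := fun s => L (s, 1)) (by fun_prop) (hLe' · 1)]
  ring

lemma boundaryIncrement_sub_eq_zero (hf : Continuous f) (hg : Continuous g)
    (h : ∀ s t, f s ≠ g t) : boundaryIncrement (fun s t => f s - g t) = 0 :=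
  boundaryIncrement_eq_zero ((hf.comp continuous_fst).sub (hg.comp continuous_snd))
    fun s t => sub_ne_zero.2 (h s t)

lemma boundaryIncrement_mul (hF : Continuous F.uncurry) (hG : Continuous G.uncurry)
    (hF0 : ∀ s t, s = 0 ∨ s = 1 ∨ t = 0 ∨ t = 1 → F s t ≠ 0)
    (hG0 : ∀ s t, s = 0 ∨ s = 1 ∨ t = 0 ∨ t = 1 → G s t ≠ 0) :
    boundaryIncrement (fun s t => F s t * G s t) = boundaryIncrement F + boundaryIncrement G := by
  have hsec : ∀ {E : ℝ → ℝ → ℂ}, Continuous E.uncurry → ∀ r, Continuous (E r) :=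
    fun hE r => hE.comp (Continuous.prodMk_right r)
  have hsec' : ∀ {E : ℝ → ℝ → ℂ}, Continuous E.uncurry → ∀ r, Continuous fun s => E s r :=
    fun hE r => hE.comp (Continuous.prodMk_left r)
  unfold boundaryIncrement
  rw [logIncrement_mul (hsec' hF 0) (hsec' hG 0) (fun s => hF0 s 0 (by simp))
      fun s => hG0 s 0 (by simp),
    logIncrement_mul (hsec hF 1) (hsec hG 1) (fun t => hF0 1 t (by simp))
      fun t => hG0 1 t (by simp),
    logIncrement_mul (hsec hF 0) (hsec hG 0) (fun t => hF0 0 t (by simp))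
      fun t => hG0 0 t (by simp),
    logIncrement_mul (hsec' hF 1) (hsec' hG 1) (fun s => hF0 s 1 (by simp))
      fun s => hG0 s 1 (by simp)]
  ring

/-- Two closed loops, each made of two paths with exchanged endpoints, have total intersection
number zero. -/
lemma boundaryIncrement_add_of_swap {f' g' : ℝ → ℂ} (hf₀ : f' 0 = f 1) (hf₁ : f' 1 = f 0)
    (hg₀ : g' 0 = g 1) (hg₁ : g' 1 = g 0) :
    boundaryIncrement (fun s t => f s - g t) + boundaryIncrement (fun s t => f s - g' t) +
      boundaryIncrement (fun s t => f' s - g t) + boundaryIncrement (fun s t => f' s - g' t)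
        = 0 := by
  simp only [boundaryIncrement, hf₀, hf₁, hg₀, hg₁]
  ring

end LogIncrement

section DSlope

variable {f : ℂ → ℂ}

lemma continuousAt_dslope_diag {z : ℂ} (hf : AnalyticAt ℂ f z) :
    ContinuousAt (fun q : ℂ × ℂ => dslope f q.2 q.1) (z, z) := by
  refine Metric.continuousAt_iff'.2 fun ε hε => ?_
  have hoff := hf.hasStrictDerivAt.hasStrictFDerivAt.isLittleO.def (half_pos hε)
  have hdiag : ContinuousAt (fun q : ℂ × ℂ => deriv f q.2) (z, z) :=
    ContinuousAt.comp (f := Prod.snd) (g := deriv f) hf.deriv.continuousAt continuousAt_snd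
  filter_upwards [hoff, Metric.continuousAt_iff'.1 hdiag ε hε] with q hq hq'
  rw [dslope_same]
  by_cases he : q.1 = q.2
  · rwa [he, dslope_same]
  · have hne : q.1 - q.2 ≠ 0 := sub_ne_zero.2 he
    have hpos : 0 < ‖q.1 - q.2‖ := norm_pos_iff.2 hne
    have hdiff : (f q.1 - f q.2) / (q.1 - q.2) - deriv f z =
        (f q.1 - f q.2 - (q.1 - q.2) * deriv f z) / (q.1 - q.2) := by field_simp
    rw [dslope_of_ne _ he, slope_def_field, dist_eq_norm, hdiff, norm_div, div_lt_iff₀ hpos]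
    simp only [ContinuousLinearMap.toSpanSingleton_apply, smul_eq_mul] at hq
    nlinarith

lemma continuous_dslope_comp {X : Type*} [TopologicalSpace X] {p q : X → ℂ} (hp : Continuous p)
    (hq : Continuous q) (hfp : Continuous fun x => f (p x)) (hfq : Continuous fun x => f (q x))
    (hf : ∀ x, p x = q x → AnalyticAt ℂ f (p x)) :
    Continuous fun x => dslope f (q x) (p x) := by
  refine continuous_iff_continuousAt.2 fun x => ?_
  by_cases he : p x = q x
  · have hdiag := continuousAt_dslope_diag (hf x he)
    nth_rw 2 [he] at hdiag
    exact ContinuousAt.comp (f := fun x => (p x, q x)) hdiag (hp.prodMk hq).continuousAt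
  · have hne : p x - q x ≠ 0 := sub_ne_zero.2 he
    refine ((hfp.sub hfq).continuousAt.div (hp.sub hq).continuousAt hne).congr ?_
    filter_upwards [(hp.sub hq).continuousAt.eventually_ne hne] with y hy
    rw [dslope_of_ne _ (sub_ne_zero.1 hy), slope_def_field]
    rfl

end DSlope

section Chord

variable {u v : ℂ} {α β η : ℝ}

/-- The retraction of `ℝ` onto `[0, 1]`. -/
def clamp (x : ℝ) : ℝ := projIcc 0 1 zero_le_one x

lemma continuous_clamp : Continuous clamp := continuous_subtype_val.comp continuous_projIcc

lemma clamp_mem (x : ℝ) : clamp x ∈ Icc (0 : ℝ) 1 := Subtype.coe_prop _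

lemma clamp_zero : clamp 0 = 0 := by simp [clamp]

lemma clamp_one : clamp 1 = 1 := by simp [clamp]

/-- The segment from `u` to `v`, constant outside the parameter interval `[0, 1]`. -/
def chord (u v : ℂ) (s : ℝ) : ℂ := u + clamp s * (v - u)

lemma continuous_chord (u v : ℂ) : Continuous (chord u v) := by
  have := continuous_clamp
  unfold chord
  fun_prop

lemma chord_zero (u v : ℂ) : chord u v 0 = u := by simp [chord, clamp_zero]

lemma chord_one (u v : ℂ) : chord u v 1 = v := by simp [chord, clamp_one]

lemma chord_mem_closedBall (hu : u ∈ closedBall (0 : ℂ) 1) (hv : v ∈ closedBall (0 : ℂ) 1)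
    (s : ℝ) : chord u v s ∈ closedBall (0 : ℂ) 1 := by
  simpa [chord] using (convex_closedBall (0 : ℂ) 1).add_smul_sub_mem hu hv (clamp_mem s)

lemma chord_mem_ball_or (hu : u ∈ sphere (0 : ℂ) 1) (hv : v ∈ sphere (0 : ℂ) 1) (hne : u ≠ v)
    (s : ℝ) : chord u v s ∈ ball (0 : ℂ) 1 ∨ chord u v s = u ∨ chord u v s = v := by
  obtain ⟨h0, h1⟩ := clamp_mem s
  rcases h0.eq_or_lt with h0 | h0
  · simp [chord, ← h0]
  rcases h1.eq_or_lt with h1 | h1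
  · simp [chord, h1]
  left
  have hint := strictConvex_closedBall ℝ (0 : ℂ) 1 (sphere_subset_closedBall hu)
    (sphere_subset_closedBall hv) hne (sub_pos.2 h1) h0 (sub_add_cancel 1 _)
  rw [interior_closedBall _ one_ne_zero] at hint
  convert hint using 1
  simp only [chord, Complex.real_smul]
  push_cast
  ring

lemma logIncrement_chord (hu : u ≠ 0) (him : (v / u).im ≠ 0) :
    logIncrement (chord u v) = Complex.log (v / u) := by
  have hslit : ∀ x, 1 + (clamp x : ℂ) * (v / u - 1) ∈ Complex.slitPlane := by
    intro x
    rw [Complex.mem_slitPlane_iff]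
    by_cases h0 : clamp x = 0
    · simp [h0]
    · simp [h0, him]
  have hlog : Continuous fun x => Complex.log (1 + (clamp x : ℂ) * (v / u - 1)) :=
    Continuous.clog (by have := continuous_clamp; fun_prop) hslit
  rw [logIncrement_eq (L := fun x => Complex.log u + Complex.log (1 + clamp x * (v / u - 1)))
    (continuous_const.add hlog)]
  · simp [clamp_zero, clamp_one]
  · intro x
    rw [Complex.exp_add, Complex.exp_log hu, Complex.exp_log (Complex.slitPlane_ne_zero (hslit x)),
      chord]
    field_simp

lemma logIncrement_chord_sub {w : ℂ} (hu : u ≠ w) (him : ((v - w) / (u - w)).im ≠ 0) :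
    logIncrement (fun s => chord u v s - w) = Complex.log ((v - w) / (u - w)) := by
  rw [← logIncrement_chord (sub_ne_zero.2 hu) him]
  exact congrArg _ (funext fun s => by simp only [chord]; ring)

lemma logIncrement_sub_chord {w : ℂ} (hu : u ≠ w) (him : ((v - w) / (u - w)).im ≠ 0) :
    logIncrement (fun s => w - chord u v s) = Complex.log ((v - w) / (u - w)) := by
  have hdiv : (v - w) / (u - w) = (w - v) / (w - u) := by
    rw [← neg_sub w v, ← neg_sub w u, neg_div_neg_eq]
  rw [hdiv] at him ⊢
  rw [← logIncrement_chord (sub_ne_zero.2 hu.symm) him]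
  exact congrArg _ (funext fun s => by simp only [chord]; ring)

lemma sin_pi_mul_pos {x : ℝ} (h0 : 0 < x) (h1 : x < 1) : 0 < Real.sin (Real.pi * x) :=
  Real.sin_pos_of_pos_of_lt_pi (by positivity) (by nlinarith [Real.pi_pos])

lemma sin_pi_mul_neg {x : ℝ} (h0 : x < 0) (h1 : -1 < x) : Real.sin (Real.pi * x) < 0 := by
  have := sin_pi_mul_pos (neg_pos.2 h0) (by linarith : -x < 1)
  rwa [mul_neg, Real.sin_neg, neg_pos] at this

lemma im_unitCirc_sub_div (hs : Real.sin (Real.pi * (η - β)) ≠ 0) :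
    ((unitCirc α - unitCirc β) / (unitCirc η - unitCirc β)).im =
      Real.sin (Real.pi * (α - η)) *
        (Real.sin (Real.pi * (α - β)) / Real.sin (Real.pi * (η - β))) := by
  have hquot : (unitCirc α - unitCirc β) / (unitCirc η - unitCirc β) =
      Complex.exp ((Real.pi * (α - η) : ℝ) * Complex.I) *
        (Real.sin (Real.pi * (α - β)) / Real.sin (Real.pi * (η - β)) : ℝ) := by
    have hs' : ((Real.sin (Real.pi * (η - β)) : ℝ) : ℂ) ≠ 0 := by exact_mod_cast hs
    have hadd : ((Real.pi * (α + β) : ℝ) : ℂ) * Complex.I =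
        (Real.pi * (α - η) : ℝ) * Complex.I + (Real.pi * (η + β) : ℝ) * Complex.I := by
      push_cast
      ring
    rw [unitCirc_sub_eq, unitCirc_sub_eq, hadd, Complex.exp_add, Complex.ofReal_div]
    field_simp [Complex.I_ne_zero, Complex.exp_ne_zero ((Real.pi * (η + β) : ℝ) * Complex.I)]
  rw [hquot, Complex.im_mul_ofReal, Complex.exp_ofReal_mul_I_im]

lemma unitCirc_ne (hlt : α < β) (hlt' : β < α + 1) : unitCirc α ≠ unitCirc β := fun he =>
  hlt.ne (eq_of_unitCirc_eq (abs_lt.2 ⟨by linarith, by linarith⟩) he)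

lemma boundaryIncrement_chord_sub_chord_ne_zero {a p y b : ℝ} (hap : a < p) (hpy : p < y)
    (hyb : y < b) (hba : b < a + 1) :
    boundaryIncrement (fun s t => chord (unitCirc y) (unitCirc a) s -
      chord (unitCirc b) (unitCirc p) t) ≠ 0 := by
  have hyb_im : ((unitCirc a - unitCirc b) / (unitCirc y - unitCirc b)).im < 0 := by
    have hneg := sin_pi_mul_neg (x := y - b) (by linarith) (by linarith)
    rw [im_unitCirc_sub_div hneg.ne]
    exact mul_neg_of_neg_of_pos (sin_pi_mul_neg (by linarith) (by linarith))
      (div_pos_of_neg_of_neg (sin_pi_mul_neg (by linarith) (by linarith)) hneg)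
  have hba_im : ((unitCirc p - unitCirc a) / (unitCirc b - unitCirc a)).im < 0 := by
    have hpos := sin_pi_mul_pos (x := b - a) (by linarith) (by linarith)
    rw [im_unitCirc_sub_div hpos.ne']
    exact mul_neg_of_neg_of_pos (sin_pi_mul_neg (by linarith) (by linarith))
      (div_pos (sin_pi_mul_pos (by linarith) (by linarith)) hpos)
  have hby_im : 0 < ((unitCirc p - unitCirc y) / (unitCirc b - unitCirc y)).im := by
    have hpos := sin_pi_mul_pos (x := b - y) (by linarith) (by linarith)
    rw [im_unitCirc_sub_div hpos.ne']
    exact mul_pos_of_neg_of_neg (sin_pi_mul_neg (by linarith) (by linarith))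
      (div_neg_of_neg_of_pos (sin_pi_mul_neg (by linarith) (by linarith)) hpos)
  have hyp_im : 0 < ((unitCirc a - unitCirc p) / (unitCirc y - unitCirc p)).im := by
    have hpos := sin_pi_mul_pos (x := y - p) (by linarith) (by linarith)
    rw [im_unitCirc_sub_div hpos.ne']
    exact mul_pos_of_neg_of_neg (sin_pi_mul_neg (by linarith) (by linarith))
      (div_neg_of_neg_of_pos (sin_pi_mul_neg (by linarith) (by linarith)) hpos)
  intro h0
  have him := congrArg Complex.im h0
  simp only [boundaryIncrement, chord_zero, chord_one] at him
  rw [logIncrement_chord_sub (unitCirc_ne hyb (by linarith)) hyb_im.ne,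
    logIncrement_sub_chord (unitCirc_ne (by linarith) hba).symm hba_im.ne,
    logIncrement_sub_chord (unitCirc_ne hyb (by linarith)).symm hby_im.ne',
    logIncrement_chord_sub (unitCirc_ne hpy (by linarith)).symm hyp_im.ne'] at him
  simp only [Complex.sub_im, Complex.add_im, Complex.log_im, Complex.zero_im] at him
  linarith [Complex.arg_neg_iff.2 hyb_im, Complex.arg_neg_iff.2 hba_im,
    Complex.arg_nonneg_iff.2 hby_im.le, Complex.arg_nonneg_iff.2 hyp_im.le]

end Chord

namespace ConformalDisk

variable {H : ℂ → ℂ}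

/-- Conformality on the open disk makes `(H (c s) - H (d t)) / (c s - d t)` extend to a
nonvanishing function, even where the paths meet. -/
lemma boundaryIncrement_comp (h : ConformalDisk H) {c d : ℝ → ℂ} (hc : Continuous c)
    (hd : Continuous d) (hcm : ∀ s, c s ∈ closedBall (0 : ℂ) 1)
    (hdm : ∀ t, d t ∈ closedBall (0 : ℂ) 1) (hmeet : ∀ s t, c s = d t → c s ∈ ball (0 : ℂ) 1)
    (hbdry : ∀ s t, s = 0 ∨ s = 1 ∨ t = 0 ∨ t = 1 → c s ≠ d t) :
    boundaryIncrement (fun s t => H (c s) - H (d t)) =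
      boundaryIncrement fun s t => c s - d t := by
  have hHc : Continuous fun s => H (c s) := h.continuousOn.comp_continuous hc hcm
  have hHd : Continuous fun t => H (d t) := h.continuousOn.comp_continuous hd hdm
  have hcont : Continuous (Function.uncurry fun s t => dslope H (d t) (c s)) :=
    continuous_dslope_comp (hc.comp continuous_fst) (hd.comp continuous_snd)
      (hHc.comp continuous_fst) (hHd.comp continuous_snd) fun x hx =>
        h.differentiableOn.analyticAt (isOpen_ball.mem_nhds (hmeet x.1 x.2 hx))
  have hne : ∀ s t, dslope H (d t) (c s) ≠ 0 := by
    intro s t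
    by_cases he : c s = d t
    · rw [← he, dslope_same]
      exact deriv_ne_zero_of_injOn isOpen_ball h.differentiableOn
        (h.injOn.mono ball_subset_closedBall) (hmeet s t he)
    · rw [dslope_of_ne _ he, slope_def_field]
      exact div_ne_zero (sub_ne_zero.2 fun hH => he (h.injOn (hcm s) (hdm t) hH))
        (sub_ne_zero.2 he)
  have hfac : (fun s t => H (c s) - H (d t)) =
      fun s t => (c s - d t) * dslope H (d t) (c s) :=
    funext fun s => funext fun t => (sub_smul_dslope H (d t) (c s)).symm
  rw [hfac, boundaryIncrement_mul _ hcont (fun s t hst => sub_ne_zero.2 (hbdry s t hst))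
      fun s t _ => hne s t, boundaryIncrement_eq_zero hcont hne, add_zero]
  exact (hc.comp continuous_fst).sub (hd.comp continuous_snd)

variable {a p y b : ℝ} {γ γ' : ℝ → ℂ}

lemma boundaryIncrement_apply_chord_ne_zero (h : ConformalDisk H) (hap : a < p) (hpy : p < y)
    (hyb : y < b) (hba : b < a + 1) :
    boundaryIncrement (fun s t => H (chord (unitCirc y) (unitCirc a) s) -
      H (chord (unitCirc b) (unitCirc p) t)) ≠ 0 := by
  have hc := chord_mem_ball_or (unitCirc_mem_sphere y) (unitCirc_mem_sphere a)
    (unitCirc_ne (hap.trans hpy) (by linarith)).symm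
  have hd := chord_mem_ball_or (unitCirc_mem_sphere b) (unitCirc_mem_sphere p)
    (unitCirc_ne (hpy.trans hyb) (by linarith)).symm
  have hnotball : ∀ α, unitCirc α ∉ ball (0 : ℂ) 1 := fun α => by simp [norm_unitCirc]
  have hmeet : ∀ s t, chord (unitCirc y) (unitCirc a) s = chord (unitCirc b) (unitCirc p) t →
      chord (unitCirc y) (unitCirc a) s ∈ ball (0 : ℂ) 1 := by
    intro s t he
    have hdt := hd t
    rw [← he] at hdt
    rcases hdt with hdt | hdt | hdt
    · exact hdt
    · rcases hc s with hcs | hcs | hcs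
      · exact hcs
      · exact absurd (hcs.symm.trans hdt) (unitCirc_ne hyb (by linarith))
      · exact absurd (hcs.symm.trans hdt) (unitCirc_ne (by linarith) hba)
    · rcases hc s with hcs | hcs | hcs
      · exact hcs
      · exact absurd (hdt.symm.trans hcs) (unitCirc_ne hpy (by linarith))
      · exact absurd (hcs.symm.trans hdt) (unitCirc_ne hap (by linarith))
  rw [h.boundaryIncrement_comp (continuous_chord _ _) (continuous_chord _ _)
    (chord_mem_closedBall (unitCirc_mem_closedBall y) (unitCirc_mem_closedBall a))
    (chord_mem_closedBall (unitCirc_mem_closedBall b) (unitCirc_mem_closedBall p)) hmeet]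
  · exact boundaryIncrement_chord_sub_chord_ne_zero hap hpy hyb hba
  · rintro s t hst he
    have hball := hmeet s t he
    rcases hst with rfl | rfl | rfl | rfl
    · exact hnotball y (by simpa only [chord_zero] using hball)
    · exact hnotball a (by simpa only [chord_one] using hball)
    · exact hnotball b (by rwa [he, chord_zero] at hball)
    · exact hnotball p (by rwa [he, chord_one] at hball)

lemma continuous_apply_chord (h : ConformalDisk H) (α β : ℝ) :
    Continuous fun s => H (chord (unitCirc α) (unitCirc β) s) :=
  h.continuousOn.comp_continuous (continuous_chord _ _)
    (chord_mem_closedBall (unitCirc_mem_closedBall α) (unitCirc_mem_closedBall β))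

lemma ne_apply_chord {α β : ℝ} (hγ : ∀ s, γ s ∉ diskImage H)
    (hne : unitCirc α ≠ unitCirc β) (hα : ∀ s, γ s ≠ bdryPt H α) (hβ : ∀ s, γ s ≠ bdryPt H β)
    (s t : ℝ) : γ s ≠ H (chord (unitCirc α) (unitCirc β) t) := by
  intro he
  rcases chord_mem_ball_or (unitCirc_mem_sphere α) (unitCirc_mem_sphere β) hne t with ht | ht | ht
  · exact hγ s (he ▸ mem_image_of_mem H ht)
  · exact hα s (by rw [he, ht, bdryPt])
  · exact hβ s (by rw [he, ht, bdryPt])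

/-- Close the two curves up by the images of two chords: the resulting loops have intersection
number zero, and the two chords contribute exactly one crossing. -/
lemma exists_eq_of_interlaced_of_continuous (h : ConformalDisk H) (hγ : Continuous γ)
    (hγ' : Continuous γ') (hγZ : ∀ x, γ x ∉ diskImage H) (hγZ' : ∀ x, γ' x ∉ diskImage H)
    (hap : a < p) (hpy : p < y) (hyb : y < b) (hba : b < a + 1) (h₀ : γ 0 = bdryPt H a)
    (h₁ : γ 1 = bdryPt H y) (h₀' : γ' 0 = bdryPt H p) (h₁' : γ' 1 = bdryPt H b) :
    ∃ s t, γ s = γ' t := by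
  by_contra! hcon
  have hya := (unitCirc_ne (hap.trans hpy) (by linarith)).symm
  have hbp := (unitCirc_ne (hpy.trans hyb) (by linarith)).symm
  refine h.boundaryIncrement_apply_chord_ne_zero hap hpy hyb hba ?_
  have hsum := boundaryIncrement_add_of_swap (f := γ) (g := γ')
    (f' := fun s => H (chord (unitCirc y) (unitCirc a) s))
    (g' := fun t => H (chord (unitCirc b) (unitCirc p) t))
    (by rw [chord_zero, h₁, bdryPt]) (by rw [chord_one, h₀, bdryPt])
    (by rw [chord_zero, h₁', bdryPt]) (by rw [chord_one, h₀', bdryPt])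
  rwa [boundaryIncrement_sub_eq_zero hγ hγ' hcon,
    boundaryIncrement_sub_eq_zero hγ (h.continuous_apply_chord b p)
      (ne_apply_chord hγZ hbp (fun s => h₁' ▸ hcon s 1) fun s => h₀' ▸ hcon s 0),
    boundaryIncrement_sub_eq_zero (h.continuous_apply_chord y a) hγ'
      fun s t => (ne_apply_chord hγZ' hya (fun t => h₁ ▸ (hcon 1 t).symm)
        (fun t => h₀ ▸ (hcon 0 t).symm) t s).symm,
    zero_add, zero_add, zero_add] at hsum

theorem exists_eq_of_interlaced (h : ConformalDisk H) (hγ : ContinuousOn γ (Icc 0 1))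
    (hγ' : ContinuousOn γ' (Icc 0 1)) (hγZ : ∀ x ∈ Icc (0 : ℝ) 1, γ x ∉ diskImage H)
    (hγZ' : ∀ x ∈ Icc (0 : ℝ) 1, γ' x ∉ diskImage H) (hap : a < p) (hpy : p < y) (hyb : y < b)
    (hba : b < a + 1) (h₀ : γ 0 = bdryPt H a) (h₁ : γ 1 = bdryPt H y) (h₀' : γ' 0 = bdryPt H p)
    (h₁' : γ' 1 = bdryPt H b) :
    ∃ s ∈ Icc (0 : ℝ) 1, ∃ t ∈ Icc (0 : ℝ) 1, γ s = γ' t := by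
  obtain ⟨s, t, hst⟩ := h.exists_eq_of_interlaced_of_continuous
    (hγ.comp_continuous continuous_clamp clamp_mem)
    (hγ'.comp_continuous continuous_clamp clamp_mem) (fun x => hγZ _ (clamp_mem x))
    (fun x => hγZ' _ (clamp_mem x)) hap hpy hyb hba (by simpa [clamp_zero])
    (by simpa [clamp_one]) (by simpa [clamp_zero]) (by simpa [clamp_one])
  exact ⟨_, clamp_mem s, _, clamp_mem t, hst⟩

end ConformalDisk

/-! ### Families of curves that meet each other -/

section Duality

variable {Γ Γ₁ Γ₂ : Set (ℝ → ℂ)} {ρ ρ' : ℂ → ℝ≥0∞} {γ : ℝ → ℂ} {s t δ : ℝ}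

lemma sq_lintegral_le_measure_univ_mul {X : Type*} [MeasurableSpace X] (μ : Measure X)
    {f : X → ℝ≥0∞} (hf : AEMeasurable f μ) :
    (∫⁻ x, f x ∂μ) ^ 2 ≤ μ univ * ∫⁻ x, f x ^ 2 ∂μ := by
  have h := ENNReal.lintegral_mul_le_Lp_mul_Lq μ Real.HolderConjugate.two_two
    (f := fun _ => 1) aemeasurable_const hf
  simp only [Pi.mul_apply, one_mul, lintegral_const, ENNReal.rpow_ofNat] at h
  refine (pow_le_pow_left₀ zero_le h 2).trans_eq ?_
  simp only [mul_pow, ← ENNReal.rpow_mul_natCast]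
  norm_num

lemma Admissible.convex_combination {a b : ℝ≥0∞} (hab : a + b = 1) (hρ : Admissible ρ Γ)
    (hρ' : Admissible ρ' Γ) : Admissible (fun z => a * ρ z + b * ρ' z) Γ := fun γ hγ =>
  calc (1 : ℝ≥0∞) = a * 1 + b * 1 := by rw [mul_one, mul_one, hab]
    _ ≤ a * metricLength ρ γ 0 1 + b * metricLength ρ' γ 0 1 := by
        gcongr
        exacts [hρ γ hγ, hρ' γ hγ]
    _ ≤ _ := mul_metricLength_add_mul_metricLength_le a b

lemma metricArea_add_const_mul {a b : ℝ≥0∞} (hρ : Measurable ρ) (hρ' : Measurable ρ') :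
    metricArea (fun z => a * ρ z + b * ρ' z) =
      a ^ 2 * metricArea ρ + 2 * a * b * (∫⁻ z, ρ z * ρ' z) + b ^ 2 * metricArea ρ' := by
  unfold metricArea
  rw [← lintegral_const_mul _ (by fun_prop), ← lintegral_const_mul _ (by fun_prop),
    ← lintegral_const_mul _ (by fun_prop), ← lintegral_add_left (by fun_prop),
    ← lintegral_add_left (by fun_prop)]
  exact lintegral_congr fun z => by ring

-- An almost extremal metric is almost orthogonal to the differences of admissible metrics:
-- otherwise a small step towards `ρ₁` would decrease the area below the extremal width.
lemma exists_metric_forall_le_lintegral_mul {w P : ℝ} (hw : 0 < w) (hP : 0 ≤ P)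
    (hΓ : extremalWidth Γ = ENNReal.ofReal w) :
    ∃ ρ₀ : ℂ → ℝ≥0∞, Measurable ρ₀ ∧ metricArea ρ₀ ≤ ENNReal.ofReal (2 * w) ∧
      ∀ ρ₁ : ℂ → ℝ≥0∞, Measurable ρ₁ → Admissible ρ₁ Γ → metricArea ρ₁ ≤ ENNReal.ofReal P →
        ENNReal.ofReal (w / 2) ≤ ∫⁻ z, ρ₀ z * ρ₁ z := by
  set t : ℝ := w / (2 * (2 * w + P)) with ht
  have ht0 : 0 < t := by positivity
  have ht1 : t < 1 := by
    rw [ht, div_lt_one (by positivity)]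
    linarith
  have htw : t * (2 * w + P) = w / 2 := by
    rw [ht]
    field_simp
  obtain ⟨ρ₀, hρ₀, hadm₀, harea₀⟩ := exists_metric_of_extremalWidth_lt (F := Γ)
    (b := ENNReal.ofReal (w + t * w / 4))
    (hΓ ▸ (ENNReal.ofReal_lt_ofReal_iff (by positivity)).2 (lt_add_of_pos_right _ (by positivity)))
  refine ⟨ρ₀, hρ₀, harea₀.le.trans (ENNReal.ofReal_le_ofReal (by nlinarith)),
    fun ρ₁ hρ₁ hadm₁ harea₁ => not_lt.1 fun hlt => ?_⟩
  have hab : ENNReal.ofReal (1 - t) + ENNReal.ofReal t = 1 := by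
    rw [← ENNReal.ofReal_add (sub_pos.2 ht1).le ht0.le, sub_add_cancel, ENNReal.ofReal_one]
  have hle : ENNReal.ofReal w ≤ ENNReal.ofReal
      ((1 - t) ^ 2 * (w + t * w / 4) + 2 * (1 - t) * t * (w / 2) + t ^ 2 * P) := by
    have h1t : 0 < 1 - t := sub_pos.2 ht1
    calc ENNReal.ofReal w ≤ _ := hΓ ▸ extremalWidth_le_metricArea (by fun_prop)
          (hadm₀.convex_combination hab hadm₁)
      _ = _ := metricArea_add_const_mul hρ₀ hρ₁
      _ ≤ ENNReal.ofReal (1 - t) ^ 2 * ENNReal.ofReal (w + t * w / 4) +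
            2 * ENNReal.ofReal (1 - t) * ENNReal.ofReal t * ENNReal.ofReal (w / 2) +
            ENNReal.ofReal t ^ 2 * ENNReal.ofReal P := by
          gcongr
      _ = _ := by
          rw [← ENNReal.ofReal_pow h1t.le, ← ENNReal.ofReal_pow ht0.le, ← ENNReal.ofReal_ofNat 2,
            ← ENNReal.ofReal_mul (by positivity), ← ENNReal.ofReal_mul (by positivity),
            ← ENNReal.ofReal_mul (by positivity), ← ENNReal.ofReal_mul (by positivity),
            ← ENNReal.ofReal_mul (by positivity), ← ENNReal.ofReal_add (by positivity)
            (by positivity), ← ENNReal.ofReal_add (by positivity) (by positivity)]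
  rw [ENNReal.ofReal_le_ofReal_iff (by positivity)] at hle
  have htt : t ^ 2 * (2 * w + P) = t * (w / 2) := by rw [← htw]; ring
  have hstep : (1 - t) ^ 2 * (t * w / 4) ≤ t * w / 4 :=
    mul_le_of_le_one_left (by positivity) (by nlinarith)
  nlinarith [mul_pos ht0 hw, sq_nonneg t]

/-- The integral of `ρ` over balls of radius `δ`; up to a constant factor it is the metric `ρ`
averaged at the scale `δ`. -/
def ballIntegral (ρ : ℂ → ℝ≥0∞) (δ : ℝ) (z : ℂ) : ℝ≥0∞ := ∫⁻ ζ in ball z δ, ρ ζ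

lemma ballIntegral_eq_lintegral_indicator (z : ℂ) :
    ballIntegral ρ δ z = ∫⁻ ζ, (ball ζ δ).indicator 1 z * ρ ζ := by
  rw [ballIntegral, ← lintegral_indicator measurableSet_ball]
  refine lintegral_congr fun ζ => ?_
  by_cases h : dist z ζ < δ <;> simp [indicator, dist_comm ζ z, h]

lemma measurable_indicator_ball (hρ : Measurable ρ) :
    Measurable fun q : ℂ × ℂ => (ball q.2 δ).indicator 1 q.1 * ρ q.2 := by
  refine Measurable.mul ?_ (hρ.comp measurable_snd)
  exact (measurable_const (a := (1 : ℝ≥0∞))).indicator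
    (measurableSet_lt (f := fun q : ℂ × ℂ => dist q.1 q.2) (by fun_prop) measurable_const)

@[fun_prop]
lemma measurable_ballIntegral (hρ : Measurable ρ) : Measurable (ballIntegral ρ δ) := by
  simp only [funext (ballIntegral_eq_lintegral_indicator (ρ := ρ) (δ := δ))]
  exact (measurable_indicator_ball hρ).lintegral_prod_right'

lemma lintegral_ballIntegral (hρ : Measurable ρ) (hδ : 0 ≤ δ) :
    ∫⁻ z, ballIntegral ρ δ z = ENNReal.ofReal (Real.pi * δ ^ 2) * ∫⁻ z, ρ z := by
  simp only [ballIntegral_eq_lintegral_indicator]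
  rw [lintegral_lintegral_swap (measurable_indicator_ball hρ).aemeasurable,
    ← lintegral_const_mul _ hρ]
  refine lintegral_congr fun ζ => ?_
  rw [lintegral_mul_const _ (measurable_one.indicator measurableSet_ball),
    lintegral_indicator_one measurableSet_ball, volume_ball_eq_ofReal ζ hδ]

lemma metricArea_ballIntegral_le (hρ : Measurable ρ) (hδ : 0 ≤ δ) :
    metricArea (ballIntegral ρ δ) ≤ ENNReal.ofReal (Real.pi * δ ^ 2) ^ 2 * metricArea ρ :=
  calc metricArea (ballIntegral ρ δ)
      ≤ ∫⁻ z, ENNReal.ofReal (Real.pi * δ ^ 2) * ballIntegral (fun ζ => ρ ζ ^ 2) δ z := by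
        refine lintegral_mono fun z => ?_
        simpa [ballIntegral, volume_ball_eq_ofReal z hδ] using
          sq_lintegral_le_measure_univ_mul (volume.restrict (ball z δ)) hρ.aemeasurable
    _ = ENNReal.ofReal (Real.pi * δ ^ 2) ^ 2 * metricArea ρ := by
        rw [lintegral_const_mul _ (measurable_ballIntegral (hρ.pow_const 2)),
          lintegral_ballIntegral (hρ.pow_const 2) hδ, metricArea, sq (ENNReal.ofReal _), mul_assoc]

lemma IsCurveOn.metricLength_ballIntegral (hγ : IsCurveOn γ s t) (hρ : Measurable ρ) :
    metricLength (ballIntegral ρ δ) γ s t =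
      ∫⁻ ζ, ρ ζ * metricLength ((ball ζ δ).indicator 1) γ s t := by
  have hγm : AEMeasurable γ (volume.restrict (Ioo s t)) :=
    (hγ.1.mono Ioo_subset_Icc_self).aemeasurable measurableSet_Ioo
  have hderiv : Measurable fun x => ‖deriv γ x‖ₑ := (measurable_deriv γ).enorm
  have hkernel : AEMeasurable (Function.uncurry fun x ζ =>
      (ball ζ δ).indicator 1 (γ x) * ρ ζ * ‖deriv γ x‖ₑ)
      ((volume.restrict (Ioo s t)).prod volume) :=
    ((measurable_indicator_ball hρ).comp_aemeasurable
      (hγm.comp_fst.prodMk measurable_snd.aemeasurable)).mul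
      (hderiv.comp measurable_fst).aemeasurable
  calc metricLength (ballIntegral ρ δ) γ s t
      = ∫⁻ x in Ioo s t, ∫⁻ ζ, (ball ζ δ).indicator 1 (γ x) * ρ ζ * ‖deriv γ x‖ₑ := by
        refine lintegral_congr fun x => ?_
        rw [ballIntegral_eq_lintegral_indicator, lintegral_mul_const' _ _ enorm_ne_top]
    _ = ∫⁻ ζ, ∫⁻ x in Ioo s t, (ball ζ δ).indicator 1 (γ x) * ρ ζ * ‖deriv γ x‖ₑ :=
        lintegral_lintegral_swap hkernel
    _ = _ := by
        refine lintegral_congr fun ζ => ?_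
        have hball : AEMeasurable
            (fun x => (ball ζ δ).indicator (1 : ℂ → ℝ≥0∞) (γ x) * ‖deriv γ x‖ₑ)
            (volume.restrict (Ioo s t)) :=
          ((measurable_one.indicator measurableSet_ball).comp_aemeasurable hγm).mul
            hderiv.aemeasurable
        rw [metricLength, ← lintegral_const_mul'' _ hball]
        exact lintegral_congr fun x => by rw [mul_left_comm, mul_assoc]

lemma exists_le_dist_of_le_dist {r : ℝ} (h : 2 * r ≤ ‖γ 1 - γ 0‖) (p : ℂ) :
    ∃ τ ∈ Icc (0 : ℝ) 1, r ≤ ‖γ τ - p‖ := by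
  by_contra! hlt
  have h0 := hlt 0 (left_mem_Icc.2 zero_le_one)
  have h1 := hlt 1 (right_mem_Icc.2 zero_le_one)
  have := norm_sub_le (γ 1 - p) (γ 0 - p)
  rw [sub_sub_sub_cancel_right] at this
  linarith

lemma ofReal_mul_lintegral_thickening_le {r : ℝ} (hγ : IsCurve γ) (hr : 2 * r ≤ ‖γ 1 - γ 0‖)
    (hρ : Measurable ρ) :
    ENNReal.ofReal r * ∫⁻ ζ in thickening r (γ '' Icc 0 1), ρ ζ ≤
      metricLength (ballIntegral ρ (2 * r)) γ 0 1 := by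
  rw [IsCurveOn.metricLength_ballIntegral hγ hρ, ← lintegral_const_mul _ hρ]
  refine (setLIntegral_mono' isOpen_thickening.measurableSet fun ζ hζ => ?_).trans
    (setLIntegral_le_lintegral _ _)
  obtain ⟨_, ⟨τ, hτ, rfl⟩, hζτ⟩ := mem_thickening_iff.1 hζ
  obtain ⟨τ', hτ', hττ'⟩ := exists_le_dist_of_le_dist hr (γ τ)
  rw [mul_comm]
  gcongr
  rw [← one_mul (ENNReal.ofReal r)]
  refine IsCurveOn.mul_le_metricLength_of_dist hγ hτ hτ' hττ' fun x _ hx => ?_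
  rw [← dist_eq_norm] at hx
  rw [indicator_of_mem, Pi.one_apply]
  exact mem_ball.2 (by linarith [dist_triangle (γ x) (γ τ) ζ, dist_comm ζ (γ τ)])

lemma admissible_indicator_thickening {T : Set ℂ} {r : ℝ} (hr : 0 < r)
    (hΓ : ∀ γ ∈ Γ, IsCurve γ ∧ 2 * r ≤ ‖γ 1 - γ 0‖)
    (hT : ∀ γ ∈ Γ, ∃ τ ∈ Icc (0 : ℝ) 1, γ τ ∈ T) :
    Admissible ((thickening r T).indicator fun _ => ENNReal.ofReal r⁻¹) Γ := fun γ hγ => by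
  obtain ⟨τ, hτ, hτT⟩ := hT γ hγ
  obtain ⟨τ', hτ', hdist⟩ := exists_le_dist_of_le_dist (hΓ γ hγ).2 (γ τ)
  have hone : ENNReal.ofReal r⁻¹ * ENNReal.ofReal r = 1 := by
    rw [← ENNReal.ofReal_mul (by positivity), inv_mul_cancel₀ hr.ne', ENNReal.ofReal_one]
  refine hone ▸ IsCurveOn.mul_le_metricLength_of_dist (hΓ γ hγ).1 hτ hτ' hdist fun x _ hx => ?_
  rw [indicator_of_mem (mem_thickening_iff.2 ⟨γ τ, hτT, by rwa [dist_eq_norm]⟩)]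

lemma le_metricLength_ballIntegral {R r m : ℝ} (hr : 0 < r)
    (hγ : IsCurve γ) (hγR : ∀ t ∈ Icc (0 : ℝ) 1, γ t ∈ closedBall 0 R)
    (hdist : 2 * r ≤ ‖γ 1 - γ 0‖)
    (hΓ : ∀ γ' ∈ Γ, IsCurve γ' ∧ 2 * r ≤ ‖γ' 1 - γ' 0‖)
    (hmeet : ∀ γ' ∈ Γ, ∃ s ∈ Icc (0 : ℝ) 1, ∃ t ∈ Icc (0 : ℝ) 1, γ' s = γ t) (hρ : Measurable ρ)
    (hpair : ∀ ρ₁ : ℂ → ℝ≥0∞, Measurable ρ₁ → Admissible ρ₁ Γ →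
      metricArea ρ₁ ≤ ENNReal.ofReal (r⁻¹ ^ 2 * (Real.pi * (R + r) ^ 2)) →
      ENNReal.ofReal m ≤ ∫⁻ z, ρ z * ρ₁ z) :
    ENNReal.ofReal (r ^ 2 * m) ≤ metricLength (ballIntegral ρ (2 * r)) γ 0 1 := by
  set T := thickening r (γ '' Icc 0 1)
  have hT : MeasurableSet T := isOpen_thickening.measurableSet
  have hR : 0 ≤ R :=
    dist_nonneg.trans (mem_closedBall.1 (hγR 0 (left_mem_Icc.2 zero_le_one)))
  have hTR : T ⊆ ball 0 (R + r) := fun z hz => by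
    obtain ⟨_, ⟨τ, hτ, rfl⟩, hlt⟩ := mem_thickening_iff.1 hz
    exact mem_ball.2 (by linarith [dist_triangle z (γ τ) 0, mem_closedBall.1 (hγR τ hτ)])
  have harea : metricArea (T.indicator fun _ => ENNReal.ofReal r⁻¹) ≤
      ENNReal.ofReal (r⁻¹ ^ 2 * (Real.pi * (R + r) ^ 2)) := by
    rw [metricArea_indicator hT, ENNReal.ofReal_mul (by positivity),
      ENNReal.ofReal_pow (by positivity), ← volume_ball_eq_ofReal 0 (by positivity)]
    gcongr
  have hadm : Admissible (T.indicator fun _ => ENNReal.ofReal r⁻¹) Γ :=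
    admissible_indicator_thickening hr hΓ fun γ' hγ' => by
      obtain ⟨s, hs, t, ht, hst⟩ := hmeet γ' hγ'
      exact ⟨s, hs, t, ht, hst.symm⟩
  have hint : ∫⁻ z, ρ z * T.indicator (fun _ => ENNReal.ofReal r⁻¹) z =
      ENNReal.ofReal r⁻¹ * ∫⁻ z in T, ρ z := by
    rw [← lintegral_const_mul _ hρ, ← lintegral_indicator hT]
    refine lintegral_congr fun z => ?_
    by_cases hz : z ∈ T <;> simp [hz, mul_comm]
  calc ENNReal.ofReal (r ^ 2 * m) = ENNReal.ofReal (r ^ 2) * ENNReal.ofReal m :=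
        ENNReal.ofReal_mul (by positivity)
    _ ≤ ENNReal.ofReal (r ^ 2) * (ENNReal.ofReal r⁻¹ * ∫⁻ z in T, ρ z) := by
        gcongr
        exact (hpair _ (measurable_const.indicator hT) hadm harea).trans_eq hint
    _ = ENNReal.ofReal r * ∫⁻ z in T, ρ z := by
        rw [← mul_assoc, ← ENNReal.ofReal_mul (by positivity), sq, mul_assoc,
          mul_inv_cancel₀ hr.ne', mul_one]
    _ ≤ _ := ofReal_mul_lintegral_thickening_le hγ hdist hρ

-- An almost extremal metric for `Γ₁` has a large integral over the neighbourhood of every curve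
-- of `Γ₂`, so that its average at the scale `r` is a multiple of an admissible metric for `Γ₂`.
theorem extremalWidth_mul_extremalWidth_le {R r : ℝ} (hR : 0 ≤ R) (hr : 0 < r)
    (h₁ : ∀ γ ∈ Γ₁, IsCurve γ ∧ γ 0 ∈ closedBall 0 R ∧ 2 * r ≤ ‖γ 1 - γ 0‖)
    (h₂ : ∀ γ ∈ Γ₂, IsCurve γ ∧ (∀ t ∈ Icc (0 : ℝ) 1, γ t ∈ closedBall 0 R) ∧
      2 * r ≤ ‖γ 1 - γ 0‖)
    (hmeet : ∀ γ₁ ∈ Γ₁, ∀ γ₂ ∈ Γ₂, ∃ s ∈ Icc (0 : ℝ) 1, ∃ t ∈ Icc (0 : ℝ) 1, γ₁ s = γ₂ t) :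
    extremalWidth Γ₁ * extremalWidth Γ₂ ≤ ENNReal.ofReal (128 * Real.pi ^ 2) := by
  rcases eq_or_ne (extremalWidth Γ₁) 0 with h0 | h0
  · simp [h0]
  have hfin : extremalWidth Γ₁ ≠ ⊤ := ne_top_of_le_ne_top ENNReal.ofReal_ne_top
    (extremalWidth_le_of_dist hR hr fun γ hγ => ⟨(h₁ γ hγ).1, (h₁ γ hγ).2.1,
      exists_le_dist_of_le_dist (h₁ γ hγ).2.2 (γ 0)⟩)
  set w := (extremalWidth Γ₁).toReal
  have hw : 0 < w := ENNReal.toReal_pos h0 hfin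
  have hΓ₁ : extremalWidth Γ₁ = ENNReal.ofReal w := (ENNReal.ofReal_toReal hfin).symm
  obtain ⟨ρ, hρ, hρw, hpair⟩ := exists_metric_forall_le_lintegral_mul hw
    (P := r⁻¹ ^ 2 * (Real.pi * (R + r) ^ 2)) (by positivity) hΓ₁
  set κ : ℝ := 2 / (r ^ 2 * w) with hκ
  have hadm : Admissible (fun z => ENNReal.ofReal κ * ballIntegral ρ (2 * r) z) Γ₂ := fun γ hγ => by
    obtain ⟨hcurve, hγR, hdist⟩ := h₂ γ hγ
    rw [metricLength_const_mul ENNReal.ofReal_ne_top]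
    calc (1 : ℝ≥0∞) = ENNReal.ofReal κ * ENNReal.ofReal (r ^ 2 * (w / 2)) := by
          rw [← ENNReal.ofReal_mul (by positivity), ← ENNReal.ofReal_one, hκ]
          congr 1
          field_simp
      _ ≤ _ := by
          gcongr
          exact le_metricLength_ballIntegral hr hcurve hγR hdist
            (fun γ' hγ' => ⟨(h₁ γ' hγ').1, (h₁ γ' hγ').2.2⟩)
            (fun γ' hγ' => hmeet γ' hγ' γ hγ) hρ hpair
  calc extremalWidth Γ₁ * extremalWidth Γ₂
      ≤ ENNReal.ofReal w * (ENNReal.ofReal κ ^ 2 *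
          (ENNReal.ofReal (Real.pi * (2 * r) ^ 2) ^ 2 * ENNReal.ofReal (2 * w))) := by
        rw [hΓ₁]
        gcongr
        refine (extremalWidth_le_metricArea (by fun_prop) hadm).trans ?_
        rw [metricArea_const_mul ENNReal.ofReal_ne_top]
        gcongr
        exact (metricArea_ballIntegral_le hρ (by positivity)).trans (by gcongr)
    _ = ENNReal.ofReal (128 * Real.pi ^ 2) := by
        rw [← ENNReal.ofReal_pow (by positivity), ← ENNReal.ofReal_pow (by positivity),
          ← ENNReal.ofReal_mul (by positivity), ← ENNReal.ofReal_mul (by positivity),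
          ← ENNReal.ofReal_mul (by positivity), hκ]
        congr 1
        field_simp
        ring

lemma exists_pos_forall_le_norm_sub {A B : Set ℂ} (hA : IsCompact A) (hB : IsClosed B)
    (hd : Disjoint A B) : ∃ δ : ℝ, 0 < δ ∧ ∀ x ∈ A, ∀ y ∈ B, δ ≤ ‖y - x‖ := by
  obtain ⟨δ, hδ, h⟩ := Metric.exists_pos_forall_lt_edist hA hB hd
  refine ⟨δ, hδ, fun x hx y hy => ?_⟩
  have := h x hx y hy
  rw [edist_nndist, ENNReal.coe_lt_coe, ← NNReal.coe_lt_coe, coe_nndist] at this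
  rw [← dist_eq_norm, dist_comm]
  exact this.le

end Duality

/-! ### Jumps between boundary points -/

/-- The curves in `U` from the boundary point of parameter `α` to that of parameter `β`, for all
`α` and `β` with `P α β`. Only the interior of the curve has to lie in `U`. -/
def jumpFamily (H : ℂ → ℂ) (U : Set ℂ) (P : ℝ → ℝ → Prop) : Set (ℝ → ℂ) :=
  {γ | IsCurve γ ∧ (∀ x ∈ Ioo (0 : ℝ) 1, γ x ∈ U) ∧
    ∃ α β, γ 0 = bdryPt H α ∧ γ 1 = bdryPt H β ∧ P α β}

/-- The jump from `α` to `β` leads from the boundary arc `[u, v]` to the outside of the concentric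
arc which is `lam` times as long. -/
def LongJump (lam u v α β : ℝ) : Prop :=
  α ∈ Icc u v ∧ lam * (v - u) / 2 < |β - (u + v) / 2| ∧ |β - (u + v) / 2| ≤ 1 / 2

/-- The subarcs of the boundary arc `[E, F]` are `M`-thin at scale `lam`: `W⁺_lam ≤ M`. -/
def Thin (H : ℂ → ℂ) (lam E F : ℝ) (M : ℝ≥0∞) : Prop :=
  ∀ u v, E ≤ u → u < v → v ≤ F →
    extremalWidth (jumpFamily H (diskImage H)ᶜ (LongJump lam u v)) ≤ M

/-- A jump within the boundary arc `[x₀, y₀]` which a curve crossing the gap `[e, f]` without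
landing in `[n₁, n₂] ⊆ [e, f]` has to make: it jumps over `[n₁, n₂]` but not over all of `[e, f]`,
or it joins `[n₁, n₂]` to one of the two sides of the gap. -/
def BadJump (x₀ e n₁ n₂ f y₀ α β : ℝ) : Prop :=
  α ∈ Icc x₀ y₀ ∧ β ∈ Icc x₀ y₀ ∧
    ((α < n₁ ∧ n₂ < β ∧ ¬(α ≤ e ∧ f ≤ β)) ∨ (α ≤ e ∧ β ∈ Icc n₁ n₂) ∨ (α ∈ Icc n₁ n₂ ∧ f ≤ β))

section Jumps

variable {H : ℂ → ℂ} {U : Set ℂ} {P Q Q' : ℝ → ℝ → Prop} {γ : ℝ → ℂ}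

lemma extremalWidth_jumpFamily_mono (h : ∀ α β, P α β → Q α β) :
    extremalWidth (jumpFamily H U P) ≤ extremalWidth (jumpFamily H U Q) :=
  extremalWidth_mono fun _ ⟨hγ, hU, α, β, h0, h1, hP⟩ => ⟨hγ, hU, α, β, h0, h1, h α β hP⟩

lemma extremalWidth_jumpFamily_le_add (h : ∀ α β, P α β → Q α β ∨ Q' α β) :
    extremalWidth (jumpFamily H U P) ≤
      extremalWidth (jumpFamily H U Q) + extremalWidth (jumpFamily H U Q') :=
  extremalWidth_le_add fun _ ⟨hγ, hU, α, β, h0, h1, hP⟩ => (h α β hP).imp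
    (fun hQ => ⟨hγ, hU, α, β, h0, h1, hQ⟩) fun hQ => ⟨hγ, hU, α, β, h0, h1, hQ⟩

lemma extremalWidth_jumpFamily_swap :
    extremalWidth (jumpFamily H U fun α β => P β α) ≤ extremalWidth (jumpFamily H U P) := by
  refine extremalWidth_le_of_reverse fun γ ⟨hγ, hU, α, β, h0, h1, hP⟩ =>
    ⟨?_, fun x hx => hU _ ⟨sub_pos.2 hx.2, sub_lt_self 1 hx.1⟩, β, α, ?_, ?_, hP⟩
  · simpa [IsCurve, IsCurveOn] using IsCurveOn.reverse hγ
  · simpa using h1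
  · simpa using h0

lemma forall_mem_of_mem_jumpFamily {V : Set ℂ} (hγ : γ ∈ jumpFamily H U P) (hU : U ⊆ V)
    (hV : diskBdry H ⊆ V) : ∀ x ∈ Icc (0 : ℝ) 1, γ x ∈ V := by
  obtain ⟨-, hint, α, β, h0, h1, -⟩ := hγ
  intro x hx
  rcases hx.1.eq_or_lt with rfl | hx0
  · exact h0 ▸ hV (bdryPt_mem_diskBdry α)
  rcases hx.2.eq_or_lt with rfl | hx1
  · exact h1 ▸ hV (bdryPt_mem_diskBdry β)
  · exact hU (hint x ⟨hx0, hx1⟩)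

lemma ConformalDisk.forall_notMem_diskImage (h : ConformalDisk H)
    (hγ : γ ∈ jumpFamily H (diskImage H)ᶜ P) : ∀ x ∈ Icc (0 : ℝ) 1, γ x ∉ diskImage H :=
  forall_mem_of_mem_jumpFamily hγ Subset.rfl fun _ hz => h.notMem_diskImage hz

lemma ConformalDisk.extremalWidth_jumpFamily_compl_diskBdry_le (h : ConformalDisk H) :
    extremalWidth (jumpFamily H (diskBdry H)ᶜ P) ≤
      extremalWidth (jumpFamily H (diskImage H) P) +
        extremalWidth (jumpFamily H (diskImage H)ᶜ P) :=
  extremalWidth_le_add fun _ ⟨hγ, hint, hends⟩ =>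
    (h.forall_mem_or_forall_notMem_diskImage (hγ.1.mono Ioo_subset_Icc_self) hint).imp
      (fun hZ => ⟨hγ, hZ, hends⟩) fun hZ => ⟨hγ, hZ, hends⟩

end Jumps

/-! ### Outer jumps -/

section OuterJumps

variable {H : ℂ → ℂ} {P P₁ P₂ : ℝ → ℝ → Prop} {x₀ u m v y₀ : ℝ}

lemma extremalWidth_le_add_sixteen {F : Set (ℝ → ℂ)} {R : ℝ} (hR : 0 < R)
    (hF : ∀ γ ∈ F, IsCurve γ ∧ γ 0 ∈ closedBall 0 R) :
    extremalWidth F ≤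
      extremalWidth {γ ∈ F | ∀ t ∈ Icc (0 : ℝ) 1, γ t ∈ closedBall 0 (2 * R)} + 16 := by
  set G : Set (ℝ → ℂ) := {γ ∈ F | ∃ t ∈ Icc (0 : ℝ) 1, γ t ∉ closedBall 0 (2 * R)}
  have hG : extremalWidth G ≤ 16 := by
    have hdist := extremalWidth_le_of_dist (F := G) (p := 0) hR.le hR fun γ ⟨hγF, τ, hτ, hτR⟩ => by
      refine ⟨(hF γ hγF).1, (hF γ hγF).2, τ, hτ, ?_⟩
      have h0 := mem_closedBall.1 (hF γ hγF).2
      rw [mem_closedBall, not_le] at hτR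
      rw [← dist_eq_norm]
      linarith [dist_triangle (γ τ) (γ 0) 0]
    refine hdist.trans ?_
    rw [← two_mul, mul_div_assoc, div_self hR.ne', ← ENNReal.ofReal_ofNat 16]
    exact ENNReal.ofReal_le_ofReal (by linarith [Real.pi_le_four])
  refine (extremalWidth_le_add fun γ hγ => ?_).trans (add_le_add_right hG _)
  by_cases hγR : ∀ t ∈ Icc (0 : ℝ) 1, γ t ∈ closedBall 0 (2 * R)
  · exact Or.inl ⟨hγ, hγR⟩
  · push Not at hγR
    exact Or.inr ⟨hγ, hγR⟩

lemma ConformalDisk.exists_eq_of_mem_jumpFamily (h : ConformalDisk H) (hy₀ : y₀ ≤ x₀ + 1 / 2)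
    {γ γ' : ℝ → ℂ}
    (hγ : γ ∈ jumpFamily H (diskImage H)ᶜ fun α β => α ∈ Icc x₀ u ∧ β ∈ Icc m v)
    (hγ' : γ' ∈ jumpFamily H (diskImage H)ᶜ fun α β => α ∈ Icc u m ∧ β ∈ Icc v y₀) :
    ∃ s ∈ Icc (0 : ℝ) 1, ∃ t ∈ Icc (0 : ℝ) 1, γ s = γ' t := by
  have hγZ := h.forall_notMem_diskImage hγ
  have hγZ' := h.forall_notMem_diskImage hγ'
  obtain ⟨hc, -, α, η, h0, h1, hα, hη⟩ := hγ
  obtain ⟨hc', -, π, β, h0', h1', hπ, hβ⟩ := hγ'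
  have hzero : (0 : ℝ) ∈ Icc (0 : ℝ) 1 := left_mem_Icc.2 zero_le_one
  have hone : (1 : ℝ) ∈ Icc (0 : ℝ) 1 := right_mem_Icc.2 zero_le_one
  rcases (hα.2.trans hπ.1).eq_or_lt with rfl | hαπ
  · exact ⟨0, hzero, 0, hzero, h0.trans h0'.symm⟩
  rcases (hπ.2.trans hη.1).eq_or_lt with rfl | hπη
  · exact ⟨1, hone, 0, hzero, h1.trans h0'.symm⟩
  rcases (hη.2.trans hβ.1).eq_or_lt with rfl | hηβ
  · exact ⟨1, hone, 1, hone, h1.trans h1'.symm⟩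
  exact h.exists_eq_of_interlaced hc.1 hc'.1 hγZ hγZ' hαπ hπη hηβ (by linarith [hβ.2, hα.1])
    h0 h1 h0' h1'

lemma ConformalDisk.exists_pos_forall_two_mul_le (h : ConformalDisk H) {U : Set ℂ} {a b c d : ℝ}
    (hbc : b < c) (hda : d < a + 1) :
    ∃ r > 0, ∀ γ ∈ jumpFamily H U fun α β => α ∈ Icc a b ∧ β ∈ Icc c d,
      2 * r ≤ ‖γ 1 - γ 0‖ := by
  obtain ⟨δ, hδ, hsep⟩ := exists_pos_forall_le_norm_sub (h.isCompact_bdryArc a b)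
    (h.isCompact_bdryArc c d).isClosed (h.disjoint_bdryArc hbc hda)
  refine ⟨δ / 2, half_pos hδ, fun γ ⟨_, _, α, β, h0, h1, hα, hβ⟩ => ?_⟩
  rw [mul_div_cancel₀ δ two_ne_zero, h0, h1]
  exact hsep _ (bdryPt_mem_bdryArc hα) _ (bdryPt_mem_bdryArc hβ)

-- Outer jumps of the two families cross, so the duality applies to those which stay in a large
-- ball, while the others travel a long way.
lemma ConformalDisk.extremalWidth_jumpFamily_le_or_le (h : ConformalDisk H) (hum : u < m)
    (hmv : m < v) (hx₀ : x₀ ≤ u) (hv : v ≤ y₀) (hy₀ : y₀ ≤ x₀ + 1 / 2) :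
    extremalWidth (jumpFamily H (diskImage H)ᶜ fun α β => α ∈ Icc x₀ u ∧ β ∈ Icc m v) ≤ 52 ∨
      extremalWidth (jumpFamily H (diskImage H)ᶜ fun α β => α ∈ Icc u m ∧ β ∈ Icc v y₀) ≤ 52 := by
  set Γ₁ := jumpFamily H (diskImage H)ᶜ fun α β => α ∈ Icc x₀ u ∧ β ∈ Icc m v
  set Γ₂ := jumpFamily H (diskImage H)ᶜ fun α β => α ∈ Icc u m ∧ β ∈ Icc v y₀
  obtain ⟨r₁, hr₁, hdist₁⟩ := h.exists_pos_forall_two_mul_le (U := (diskImage H)ᶜ) (a := x₀)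
    (d := v) hum (by linarith)
  obtain ⟨r₂, hr₂, hdist₂⟩ := h.exists_pos_forall_two_mul_le (U := (diskImage H)ᶜ) (a := u)
    (d := y₀) hmv (by linarith)
  obtain ⟨R, hR, hbdry⟩ := h.isCompact_diskBdry.isBounded.subset_ball_lt 0 0
  have hstart {P : ℝ → ℝ → Prop} (γ : ℝ → ℂ) (hγ : γ ∈ jumpFamily H (diskImage H)ᶜ P) :
      IsCurve γ ∧ γ 0 ∈ closedBall 0 R := by
    obtain ⟨hc, -, α, -, h0, -⟩ := hγ
    exact ⟨hc, h0 ▸ ball_subset_closedBall (hbdry (bdryPt_mem_diskBdry α))⟩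
  have hprod := extremalWidth_mul_extremalWidth_le
    (Γ₁ := {γ ∈ Γ₁ | ∀ t ∈ Icc (0 : ℝ) 1, γ t ∈ closedBall 0 (2 * R)})
    (Γ₂ := {γ ∈ Γ₂ | ∀ t ∈ Icc (0 : ℝ) 1, γ t ∈ closedBall 0 (2 * R)})
    (R := 2 * R) (by positivity) (lt_min hr₁ hr₂)
    (fun γ hγ => ⟨hγ.1.1, hγ.2 0 (left_mem_Icc.2 zero_le_one),
      (mul_le_mul_of_nonneg_left (min_le_left _ _) zero_le_two).trans (hdist₁ γ hγ.1)⟩)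
    (fun γ hγ => ⟨hγ.1.1, hγ.2,
      (mul_le_mul_of_nonneg_left (min_le_right _ _) zero_le_two).trans (hdist₂ γ hγ.1)⟩)
    (fun γ hγ γ' hγ' => h.exists_eq_of_mem_jumpFamily hy₀ hγ.1 hγ'.1)
  have hmin (a b : ℝ≥0∞) (hab : a * b ≤ ENNReal.ofReal (128 * Real.pi ^ 2)) :
      a ≤ 36 ∨ b ≤ 36 := by
    by_contra! hlt
    refine (ENNReal.mul_lt_mul hlt.1 hlt.2).not_ge (hab.trans ?_)
    rw [← ENNReal.ofReal_ofNat 36, ← ENNReal.ofReal_mul (by norm_num)]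
    exact ENNReal.ofReal_le_ofReal (by nlinarith [Real.pi_lt_d2, Real.pi_pos])
  have hsum {a : ℝ≥0∞} (ha : a ≤ 36) : a + 16 ≤ 52 := (add_le_add_left ha 16).trans (by norm_num)
  exact (hmin _ _ hprod).imp
    (fun hle => (extremalWidth_le_add_sixteen hR hstart).trans (hsum hle))
    fun hle => (extremalWidth_le_add_sixteen hR hstart).trans (hsum hle)

lemma ConformalDisk.exists_bisection (h : ConformalDisk H) (hx₀ : x₀ ≤ u) (huv : u < v)
    (hv : v ≤ y₀) (hy₀ : y₀ ≤ x₀ + 1 / 2) (j : ℕ) :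
    ∃ n₁ n₂, u ≤ n₁ ∧ n₁ < n₂ ∧ n₂ ≤ v ∧ n₂ - n₁ = (v - u) / 2 ^ j ∧
      extremalWidth (jumpFamily H (diskImage H)ᶜ fun α β =>
        α ∈ Icc x₀ n₁ ∧ β ∈ Icc n₂ y₀ ∧ ¬(α ≤ u ∧ v ≤ β)) ≤ 52 * j := by
  induction j with
  | zero =>
    refine ⟨u, v, le_rfl, huv, le_rfl, by simp, ?_⟩
    refine (extremalWidth_le_metricArea (ρ := 0) measurable_const ?_).trans (by simp [metricArea])
    rintro γ ⟨-, -, α, β, -, -, hα, hβ, hn⟩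
    exact absurd ⟨hα.2, hβ.1⟩ hn
  | succ j ih =>
    obtain ⟨n₁, n₂, hun, hn, hnv, hlen, hW⟩ := ih
    have hcast : (52 * (j + 1 : ℕ) : ℝ≥0∞) = 52 * j + 52 := by push_cast; ring
    rw [hcast]
    rcases h.extremalWidth_jumpFamily_le_or_le (x₀ := x₀) (u := n₁) (m := (n₁ + n₂) / 2) (v := n₂)
      (y₀ := y₀) (by linarith) (by linarith) (by linarith) (by linarith) hy₀ with hhalf | hhalf
    · refine ⟨n₁, (n₁ + n₂) / 2, hun, by linarith, by linarith,
        by rw [pow_succ, ← div_div, ← hlen]; ring, ?_⟩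
      refine (extremalWidth_jumpFamily_le_add fun α β ⟨hα, hβ, hn⟩ => ?_).trans
        (add_le_add hW hhalf)
      exact (le_total n₂ β).imp (fun hβ' => ⟨hα, ⟨hβ', hβ.2⟩, hn⟩) fun hβ' => ⟨hα, hβ.1, hβ'⟩
    · refine ⟨(n₁ + n₂) / 2, n₂, by linarith, by linarith, hnv,
        by rw [pow_succ, ← div_div, ← hlen]; ring, ?_⟩
      refine (extremalWidth_jumpFamily_le_add fun α β ⟨hα, hβ, hn⟩ => ?_).trans
        (add_le_add hW hhalf)
      exact (le_total α n₁).imp (fun hα' => ⟨⟨hα.1, hα'⟩, hβ, hn⟩) fun hα' => ⟨⟨hα', hα.2⟩, hβ⟩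

end OuterJumps

/-! ### Inner jumps -/

section InnerJumps

variable {H : ℂ → ℂ} {c D d : ℝ}

lemma ConformalDisk.extremalWidth_jumpFamily_diskImage_le (h : ConformalDisk H) (hD : 0 < D) :
    extremalWidth (jumpFamily H (diskImage H) fun α β =>
      |α - β| ≤ 1 / 2 ∧ D ≤ 2 * |α - β| ∧ |α - c| ≤ D) ≤ 60 := by
  have hπ := Real.pi_pos
  set G : Set (ℝ → ℂ) := {γ | IsCurve γ ∧ γ 0 ∈ closedBall (unitCirc c) (2 * Real.pi * D) ∧
    ∃ τ ∈ Icc (0 : ℝ) 1, 2 * D ≤ ‖γ τ - γ 0‖}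
  have hconf : extremalWidth (jumpFamily H (diskImage H) fun α β =>
      |α - β| ≤ 1 / 2 ∧ D ≤ 2 * |α - β| ∧ |α - c| ≤ D) ≤ extremalWidth G := by
    refine extremalWidth_le_of_conformal h.isOpen_diskImage h.differentiableOn_diskInv
      (injOn_diskInv.mono (image_mono ball_subset_closedBall))
      fun γ hγ => ⟨hγ.1, hγ.2.1, ?_⟩
    have hcl := forall_mem_of_mem_jumpFamily hγ (image_mono ball_subset_closedBall)
      (image_closedBall_eq_union.ge.trans' subset_union_right)
    obtain ⟨hc, hint, α, β, h0, h1, hle, hlow, hαc⟩ := hγ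
    have hdist := norm_unitCirc_sub_le α c
    have hsep := le_norm_unitCirc_sub hle
    refine ⟨h.isCurveOn_diskInv hc hint hcl, ?_, 1, right_mem_Icc.2 zero_le_one, ?_⟩
    · simp only [h0, h.diskInv_bdryPt, mem_closedBall, dist_eq_norm]
      nlinarith
    · simp only [h0, h1, h.diskInv_bdryPt]
      rw [norm_sub_rev]
      linarith
  have hball : extremalWidth G ≤
      ENNReal.ofReal (Real.pi * ((2 * Real.pi * D + 2 * D) / (2 * D)) ^ 2) :=
    extremalWidth_le_of_dist (by positivity) (by positivity) fun γ hγ => hγ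
  refine hconf.trans (hball.trans ?_)
  rw [← ENNReal.ofReal_ofNat 60]
  refine ENNReal.ofReal_le_ofReal ?_
  have hratio : (2 * Real.pi * D + 2 * D) / (2 * D) = Real.pi + 1 := by field_simp
  rw [hratio]
  nlinarith [Real.pi_lt_d2]

lemma ConformalDisk.extremalWidth_jumpFamily_diskImage_le_mul (h : ConformalDisk H) (hd : 0 < d)
    (k : ℕ) :
    extremalWidth (jumpFamily H (diskImage H) fun α β => |α - β| ≤ 1 / 2 ∧ d ≤ |α - β| ∧
      |α - c| ≤ |α - β| ∧ |α - c| ≤ 2 ^ k * d) ≤ 60 * (k + 1) := by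
  induction k with
  | zero =>
    refine (extremalWidth_jumpFamily_mono fun α β ⟨hle, hlow, _, hαc⟩ =>
      ⟨hle, by linarith [hlow], by simpa using hαc⟩).trans
        ((h.extremalWidth_jumpFamily_diskImage_le (c := c) hd).trans (by simp))
  | succ k ih =>
    have hsucc := h.extremalWidth_jumpFamily_diskImage_le (c := c) (D := 2 ^ (k + 1) * d)
      (by positivity)
    refine (extremalWidth_jumpFamily_le_add fun α β hjump => ?_).trans
      ((add_le_add ih hsucc).trans_eq (by push_cast; ring))
    obtain ⟨hle, hlow, hαβ, hαc⟩ := hjump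
    refine (le_total |α - c| (2 ^ k * d)).imp (fun hk => ⟨hle, hlow, hαβ, hk⟩)
      fun hk => ⟨hle, ?_, hαc⟩
    rw [pow_succ]
    linarith

lemma BadJump.exists_abs_sub_le {x₀ e n₁ n₂ f y₀ α β : ℝ} (hbad : BadJump x₀ e n₁ n₂ f y₀ α β)
    (he : e + (n₂ - n₁) ≤ n₁) (hn : n₁ < n₂) (hf : n₂ + (n₂ - n₁) ≤ f) :
    (n₂ - n₁) / 2 ≤ |α - β| ∧
      (|α - (n₁ + n₂) / 2| ≤ |α - β| ∧ |α - (n₁ + n₂) / 2| ≤ f - e ∨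
        |β - (n₁ + n₂) / 2| ≤ |β - α| ∧ |β - (n₁ + n₂) / 2| ≤ f - e) := by
  obtain ⟨-, -, hbad⟩ := hbad
  rw [abs_sub_comm β α]
  rcases hbad with ⟨hα, hβ, hef⟩ | ⟨hα, hβ⟩ | ⟨hα, hβ⟩
  · rw [abs_of_neg (by linarith : α - β < 0), abs_of_neg (by linarith : α - (n₁ + n₂) / 2 < 0),
      abs_of_pos (by linarith : 0 < β - (n₁ + n₂) / 2)]
    refine ⟨by linarith, ?_⟩
    rcases le_or_gt α e with hαe | hαe
    · have hβf : β < f := not_le.1 fun hβf => hef ⟨hαe, hβf⟩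
      exact Or.inr ⟨by linarith, by linarith⟩
    · exact Or.inl ⟨by linarith, by linarith⟩
  · have hβ₁ := hβ.1
    have hβ₂ := hβ.2
    rw [abs_of_neg (by linarith : α - β < 0)]
    refine ⟨by linarith, Or.inr ⟨abs_le.2 ⟨?_, ?_⟩, abs_le.2 ⟨?_, ?_⟩⟩⟩ <;> linarith
  · have hα₁ := hα.1
    have hα₂ := hα.2
    rw [abs_of_neg (by linarith : α - β < 0)]
    refine ⟨by linarith, Or.inl ⟨abs_le.2 ⟨?_, ?_⟩, abs_le.2 ⟨?_, ?_⟩⟩⟩ <;> linarith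

lemma ConformalDisk.extremalWidth_jumpFamily_diskImage_badJump_le (h : ConformalDisk H)
    {x₀ e n₁ n₂ f y₀ : ℝ} (he : e + (n₂ - n₁) ≤ n₁) (hn : n₁ < n₂) (hf : n₂ + (n₂ - n₁) ≤ f)
    (hy₀ : y₀ ≤ x₀ + 1 / 2) {k : ℕ} (hk : f - e ≤ 2 ^ k * ((n₂ - n₁) / 2)) :
    extremalWidth (jumpFamily H (diskImage H) (BadJump x₀ e n₁ n₂ f y₀)) ≤ 120 * (k + 1) := by
  have hscales := h.extremalWidth_jumpFamily_diskImage_le_mul (c := (n₁ + n₂) / 2)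
    (half_pos (sub_pos.2 hn)) k
  refine (extremalWidth_jumpFamily_le_add fun α β hbad => ?_).trans
    ((add_le_add hscales (extremalWidth_jumpFamily_swap.trans hscales)).trans_eq (by ring))
  have hle : |α - β| ≤ 1 / 2 :=
    abs_le.2 ⟨by linarith [hbad.1.1, hbad.2.1.2], by linarith [hbad.1.2, hbad.2.1.1]⟩
  obtain ⟨hlow, hnear⟩ := hbad.exists_abs_sub_le he hn hf
  refine hnear.imp (fun hα => ⟨hle, hlow, hα.1, hα.2.trans hk⟩) fun hβ => ?_
  rw [abs_sub_comm α β] at hle hlow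
  exact ⟨hle, hlow, hβ.1, hβ.2.trans hk⟩

end InnerJumps

/-! ### Gaps -/

/-- The arc `[e, f]` is a gap in the boundary arc `[x₀, y₀]`, which is at most half of the
boundary; the curves to be blocked lead across it from `[x₀, e]` to `[f, y₀]`. -/
structure IsGap (x₀ e f y₀ : ℝ) : Prop where
  le_left : x₀ ≤ e
  lt : e < f
  right_le : f ≤ y₀
  le_add_half : y₀ ≤ x₀ + 1 / 2

/-- Each gap in `[E, F]` has a middle part, leaving out at least the fraction `κ` on both sides,
for which the bad jumps have width at most `B`. -/
def Splittable (H : ℂ → ℂ) (κ E F : ℝ) (B : ℝ≥0∞) : Prop :=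
  ∀ x₀ e f y₀, IsGap x₀ e f y₀ → E ≤ e → f ≤ F →
    ∃ n₁ n₂, e + κ * (f - e) ≤ n₁ ∧ n₁ < n₂ ∧ n₂ ≤ f - κ * (f - e) ∧
      extremalWidth (jumpFamily H (diskBdry H)ᶜ (BadJump x₀ e n₁ n₂ f y₀)) ≤ B

section Gap

variable {H : ℂ → ℂ} {lam E F x₀ e w n₁ n₂ f y₀ : ℝ} {M : ℝ≥0∞} {j : ℕ}

lemma BadJump.trichotomy {α β : ℝ} (hbad : BadJump x₀ e n₁ n₂ f y₀ α β)
    (hw : 0 < w) (hlamw : lam * w + 3 * w < 2 * (f - e)) (he : e + w ≤ n₁) (hn : n₁ < n₂)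
    (hf : n₂ ≤ f - w) (hx₀ : x₀ ≤ e) (hfy : f ≤ y₀) (hy₀ : y₀ ≤ x₀ + 1 / 2)
    (hlam : lam * (n₂ - n₁) ≤ w) :
    (α ∈ Icc x₀ n₁ ∧ β ∈ Icc n₂ y₀ ∧ ¬(α ≤ e + w ∧ f - w ≤ β)) ∨
      (LongJump lam e (e + w) α β ∨ LongJump lam (f - w) f β α) ∨
      (LongJump lam n₁ n₂ α β ∨ LongJump lam n₁ n₂ β α) := by
  obtain ⟨⟨hα₁, _⟩, ⟨_, hβ₂⟩, ⟨hα, hβ, hef⟩ | ⟨hα, hβ⟩ | ⟨hα, hβ⟩⟩ := hbad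
  · by_cases hnear : α ≤ e + w ∧ f - w ≤ β
    · refine Or.inr (Or.inl ?_)
      rcases le_or_gt α e with hαe | hαe
      · have hβf : β < f := not_le.1 fun hβf => hef ⟨hαe, hβf⟩
        rw [LongJump, LongJump, abs_of_neg (by linarith : α - (f - w + f) / 2 < 0)]
        exact Or.inr ⟨⟨hnear.2, hβf.le⟩, by linarith, by linarith⟩
      · rw [LongJump, LongJump, abs_of_pos (by linarith : 0 < β - (e + (e + w)) / 2)]
        exact Or.inl ⟨⟨hαe.le, hnear.1⟩, by linarith, by linarith⟩
    · exact Or.inl ⟨⟨hα₁, hα.le⟩, ⟨hβ.le, hβ₂⟩, hnear⟩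
  · refine Or.inr (Or.inr (Or.inr ⟨hβ, ?_⟩))
    rw [abs_of_neg (by linarith [hβ.1] : α - (n₁ + n₂) / 2 < 0)]
    constructor <;> linarith [hβ.1]
  · refine Or.inr (Or.inr (Or.inl ⟨hα, ?_⟩))
    rw [abs_of_pos (by linarith [hα.2] : 0 < β - (n₁ + n₂) / 2)]
    constructor <;> linarith [hα.2]

lemma Thin.extremalWidth_jumpFamily_badJump_le (hT : Thin H lam E F M) {N : ℝ≥0∞}
    (hE : E ≤ e) (hF : f ≤ F) (hw : 0 < w)
    (hlamw : lam * w + 3 * w < 2 * (f - e)) (he : e + w ≤ n₁) (hn : n₁ < n₂)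
    (hf : n₂ ≤ f - w) (hx₀ : x₀ ≤ e) (hfy : f ≤ y₀) (hy₀ : y₀ ≤ x₀ + 1 / 2)
    (hlam : lam * (n₂ - n₁) ≤ w)
    (hN : extremalWidth (jumpFamily H (diskImage H)ᶜ fun α β =>
      α ∈ Icc x₀ n₁ ∧ β ∈ Icc n₂ y₀ ∧ ¬(α ≤ e + w ∧ f - w ≤ β)) ≤ N) :
    extremalWidth (jumpFamily H (diskImage H)ᶜ (BadJump x₀ e n₁ n₂ f y₀)) ≤ N + 4 * M := by
  have hleft := hT e (e + w) hE (by linarith) (by linarith)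
  have hright := hT (f - w) f (by linarith) (by linarith) hF
  have hmid := hT n₁ n₂ (by linarith) hn (by linarith)
  have hside := (extremalWidth_jumpFamily_le_add fun _ _ => id).trans
    (add_le_add hleft (extremalWidth_jumpFamily_swap.trans hright))
  have hmids := (extremalWidth_jumpFamily_le_add fun _ _ => id).trans
    (add_le_add hmid (extremalWidth_jumpFamily_swap.trans hmid))
  have hlong := (extremalWidth_jumpFamily_le_add fun _ _ => id).trans (add_le_add hside hmids)
  exact (extremalWidth_jumpFamily_le_add fun α β hbad =>
    hbad.trichotomy hw hlamw he hn hf hx₀ hfy hy₀ hlam).trans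
      ((add_le_add hN hlong).trans_eq (by ring))

lemma Thin.splittable (h : ConformalDisk H) (hT : Thin H lam E F M) (hlam : 2 < lam)
    (hj : lam ^ 3 ≤ 2 ^ j) : Splittable H (lam ^ 2)⁻¹ E F (4 * M + 532 * j) := by
  intro x₀ e f y₀ ⟨hx₀, hef, hf, hy₀⟩ hE hF
  have hlam₀ : 0 < lam := by linarith
  have hq : 0 < f - e := sub_pos.2 hef
  set w := (lam ^ 2)⁻¹ * (f - e) with hw_def
  have hw : 0 < w := by positivity
  have hwq : w * lam ^ 2 = f - e := by rw [hw_def]; field_simp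
  have hlam4 : 4 < lam ^ 2 := by nlinarith
  have hw4 : 4 * w < f - e := by nlinarith
  have hlamw : 2 * (lam * w) < f - e := by nlinarith [mul_pos hw hlam₀]
  obtain ⟨n₁, n₂, hn₁, hn, hn₂, hlen, hbisect⟩ := h.exists_bisection (x₀ := x₀) (u := e + w)
    (v := f - w) (y₀ := y₀) (by linarith) (by linarith) (by linarith) hy₀ j
  have hlen' : (n₂ - n₁) * 2 ^ j = f - e - 2 * w := by
    rw [hlen, div_mul_cancel₀ _ (by positivity)]; ring
  have hlamn : lam * (n₂ - n₁) ≤ w := by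
    refine le_of_mul_le_mul_right (?_ : _ ≤ w * lam ^ 2) (by positivity : 0 < lam ^ 2)
    calc lam * (n₂ - n₁) * lam ^ 2 = (n₂ - n₁) * lam ^ 3 := by ring
      _ ≤ (n₂ - n₁) * 2 ^ j := mul_le_mul_of_nonneg_left hj (sub_nonneg.2 hn.le)
      _ ≤ w * lam ^ 2 := by linarith
  have hnw : 2 * (n₂ - n₁) < w := by nlinarith
  have hj1 : (1 : ℝ≥0∞) ≤ j := by
    rcases Nat.eq_zero_or_pos j with rfl | hpos
    · nlinarith
    · exact_mod_cast hpos
  have houter := hT.extremalWidth_jumpFamily_badJump_le hE hF hw (by linarith) hn₁ hn hn₂ hx₀ hf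
    hy₀ hlamn hbisect
  have hinner := h.extremalWidth_jumpFamily_diskImage_badJump_le (x₀ := x₀) (y₀ := y₀)
    (e := e) (f := f) (by linarith) hn (by linarith) hy₀ (k := j + 2)
    (by rw [pow_add]; linarith)
  refine ⟨n₁, n₂, hn₁, hn, hn₂, h.extremalWidth_jumpFamily_compl_diskBdry_le.trans ?_⟩
  calc _ ≤ 120 * ((j + 2 : ℕ) + 1) + (52 * j + 4 * M) := add_le_add hinner houter
    _ = 4 * M + 172 * j + 360 * 1 := by push_cast; ring
    _ ≤ 4 * M + 172 * j + 360 * j := by gcongr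
    _ = 4 * M + 532 * j := by ring

end Gap

/-! ### Crossings of a gap -/

lemma exists_Ioo_forall_notMem_union {X : Type*} [TopologicalSpace X] {γ : ℝ → X} {A B : Set X}
    {a b : ℝ} (hγ : ContinuousOn γ (Icc a b)) (hab : a ≤ b) (hA : IsClosed A) (hB : IsClosed B)
    (hAB : Disjoint A B) (ha : γ a ∈ A) (hb : γ b ∈ B) :
    ∃ s t, a ≤ s ∧ s < t ∧ t ≤ b ∧ γ s ∈ A ∧ γ t ∈ B ∧ ∀ x ∈ Ioo s t, γ x ∉ A ∪ B := by
  have hcompact {c : ℝ} (hc : c ≤ b) {S : Set X} (hS : IsClosed S) :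
      IsCompact (Icc a c ∩ γ ⁻¹' S) :=
    isCompact_Icc.of_isClosed_subset
      ((hγ.mono (Icc_subset_Icc_right hc)).preimage_isClosed_of_isClosed isClosed_Icc hS)
      inter_subset_left
  obtain ⟨t, ⟨ht, htB⟩, htmin⟩ := (hcompact le_rfl hB).exists_isLeast ⟨b, ⟨hab, le_rfl⟩, hb⟩
  obtain ⟨s, ⟨hs, hsA⟩, hsmax⟩ := (hcompact ht.2 hA).exists_isGreatest ⟨a, ⟨le_rfl, ht.1⟩, ha⟩
  have hst : s ≠ t := by
    rintro rfl
    exact disjoint_left.1 hAB hsA htB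
  refine ⟨s, t, hs.1, hs.2.lt_of_ne hst, ht.2, hsA, htB, ?_⟩
  rintro x hx (hxA | hxB)
  · exact hx.1.not_ge (hsmax ⟨⟨hs.1.trans hx.1.le, hx.2.le⟩, hxA⟩)
  · exact hx.2.not_ge (htmin ⟨⟨hs.1.trans hx.1.le, hx.2.le.trans ht.2⟩, hxB⟩)

/-- On a subinterval of `[s, t]` the curve `γ` jumps between two boundary points whose parameters
satisfy `P`: it meets the boundary only at the ends of the subinterval. -/
def HasJump (H : ℂ → ℂ) (γ : ℝ → ℂ) (s t : ℝ) (P : ℝ → ℝ → Prop) : Prop :=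
  ∃ s' t' α β, s ≤ s' ∧ s' < t' ∧ t' ≤ t ∧ (∀ x ∈ Ioo s' t', γ x ∉ diskBdry H) ∧
    γ s' = bdryPt H α ∧ γ t' = bdryPt H β ∧ P α β

lemma Admissible.one_le_metricLength_of_hasJump {H : ℂ → ℂ} {P : ℝ → ℝ → Prop} {ρ : ℂ → ℝ≥0∞}
    {γ : ℝ → ℂ} {s t : ℝ} (hρ : Admissible ρ (jumpFamily H (diskBdry H)ᶜ P))
    (hγ : IsCurveOn γ s t) (h : HasJump H γ s t P) : 1 ≤ metricLength ρ γ s t := by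
  obtain ⟨s', t', α, β, hs, hst, ht, hint, hα, hβ, hP⟩ := h
  refine le_trans ?_ (metricLength_mono_interval hs ht)
  rw [← metricLength_rescale hst]
  refine hρ _ ⟨(hγ.mono hs ht).rescale hst, fun x hx => hint _ ⟨?_, ?_⟩, α, β, ?_, ?_, hP⟩
  · linarith [mul_pos (sub_pos.2 hst) hx.1]
  · linarith [mul_lt_mul_of_pos_left hx.2 (sub_pos.2 hst)]
  · simpa using hα
  · simpa using hβ

/-- On `[s, t]` the curve `γ` crosses the gap `[e, f]` in the boundary arc `[x₀, y₀]`: it leads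
from `[x₀, e]` to `[f, y₀]`, and in between visits the boundary, but only inside the gap. -/
structure Crossing (H : ℂ → ℂ) (γ : ℝ → ℂ) (s t x₀ e f y₀ : ℝ) : Prop where
  isCurveOn : IsCurveOn γ s t
  lt : s < t
  left_mem : γ s ∈ bdryArc H x₀ e
  right_mem : γ t ∈ bdryArc H f y₀
  forall_visit : ∀ x ∈ Ioo s t, γ x ∈ diskBdry H → γ x ∈ bdryPt H '' Ioo e f
  exists_visit : ∃ x ∈ Ioo s t, γ x ∈ diskBdry H

namespace Crossing

variable {H : ℂ → ℂ} {γ : ℝ → ℂ} {s t a b u x₀ e n₁ n₂ f y₀ : ℝ}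

lemma mem_bdryArc (hγ : Crossing H γ s t x₀ e f y₀) (hgap : IsGap x₀ e f y₀) {x : ℝ}
    (hx : x ∈ Icc s t) (hxH : γ x ∈ diskBdry H) : γ x ∈ bdryArc H x₀ y₀ := by
  rcases hx.1.eq_or_lt with rfl | hsx
  · exact bdryArc_mono le_rfl (hgap.lt.le.trans hgap.right_le) hγ.left_mem
  rcases hx.2.eq_or_lt with rfl | hxt
  · exact bdryArc_mono (hgap.le_left.trans hgap.lt.le) le_rfl hγ.right_mem
  · obtain ⟨α, hα, hαγ⟩ := hγ.forall_visit x ⟨hsx, hxt⟩ hxH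
    exact hαγ ▸ bdryPt_mem_bdryArc ⟨hgap.le_left.trans hα.1.le, hα.2.le.trans hgap.right_le⟩

lemma notMem_bdryArc_left (hγ : Crossing H γ s t x₀ e f y₀) (h : ConformalDisk H)
    (hgap : IsGap x₀ e f y₀) {x : ℝ} (hx : x ∈ Ioo s t) : γ x ∉ bdryArc H x₀ e := by
  intro hxe
  obtain ⟨α, hα, hαγ⟩ := hγ.forall_visit x hx (bdryArc_subset_diskBdry hxe)
  rw [← hαγ, h.bdryPt_mem_bdryArc_iff (by linarith [hα.1])
    (by linarith [hα.2, hgap.right_le, hgap.le_add_half])] at hxe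
  exact hα.1.not_ge hxe.2

lemma notMem_bdryArc_right (hγ : Crossing H γ s t x₀ e f y₀) (h : ConformalDisk H)
    (hgap : IsGap x₀ e f y₀) {x : ℝ} (hx : x ∈ Ioo s t) : γ x ∉ bdryArc H f y₀ := by
  intro hxf
  obtain ⟨α, hα, hαγ⟩ := hγ.forall_visit x hx (bdryArc_subset_diskBdry hxf)
  rw [← hαγ, h.bdryPt_mem_bdryArc_iff
    (by linarith [hα.1, hgap.le_left, hgap.le_add_half]) (by linarith [hα.2])] at hxf
  exact hα.2.not_ge hxf.1

lemma exists_jump_over (hγ : Crossing H γ s t x₀ e f y₀) (h : ConformalDisk H)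
    (hgap : IsGap x₀ e f y₀) (hn : n₁ < n₂) (ha : s ≤ a) (hab : a ≤ b) (hb : b ≤ t)
    (haγ : γ a ∈ bdryArc H x₀ n₁) (hbγ : γ b ∈ bdryArc H n₂ y₀)
    (hN : ∀ x ∈ Icc a b, γ x ∉ bdryArc H n₁ n₂) :
    HasJump H γ a b fun α β => α ∈ Ico x₀ n₁ ∧ β ∈ Ioc n₂ y₀ := by
  obtain ⟨s', t', has, hst, htb, hsγ, htγ, hint⟩ := exists_Ioo_forall_notMem_union
    (hγ.isCurveOn.1.mono (Icc_subset_Icc ha hb)) hab (h.isCompact_bdryArc x₀ n₁).isClosed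
    (h.isCompact_bdryArc n₂ y₀).isClosed
    (h.disjoint_bdryArc hn (by linarith [hgap.le_add_half])) haγ hbγ
  obtain ⟨_, ⟨α, hα, rfl⟩, hαγ⟩ := hsγ
  obtain ⟨_, ⟨β, hβ, rfl⟩, hβγ⟩ := htγ
  have hα' : α < n₁ := hα.2.lt_of_ne fun hαn =>
    hN s' ⟨has, hst.le.trans htb⟩ (hαγ ▸ bdryPt_mem_bdryArc ⟨hαn.ge, hα.2.trans hn.le⟩)
  have hβ' : n₂ < β := hβ.1.lt_of_ne fun hβn =>
    hN t' ⟨has.trans hst.le, htb⟩ (hβγ ▸ bdryPt_mem_bdryArc ⟨hn.le.trans hβ.1, hβn.ge⟩)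
  refine ⟨s', t', α, β, has, hst, htb, fun x hx hxH => ?_, hαγ.symm, hβγ.symm,
    ⟨hα.1, hα'⟩, hβ', hβ.2⟩
  obtain ⟨_, ⟨τ, hτ, rfl⟩, hτγ⟩ := hγ.mem_bdryArc hgap (x := x)
    ⟨by linarith [hx.1], by linarith [hx.2]⟩ hxH
  rcases le_total τ n₁ with hτ₁ | hτ₁
  · exact hint x hx (Or.inl (hτγ ▸ bdryPt_mem_bdryArc ⟨hτ.1, hτ₁⟩))
  rcases le_total τ n₂ with hτ₂ | hτ₂
  · exact hN x ⟨by linarith [hx.1], by linarith [hx.2]⟩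
      (hτγ ▸ bdryPt_mem_bdryArc ⟨hτ₁, hτ₂⟩)
  · exact hint x hx (Or.inr (hτγ ▸ bdryPt_mem_bdryArc ⟨hτ₂, hτ.2⟩))

-- Jumping over all of `[e, f]` at once is no bad jump, but would leave no visit to the gap.
lemma exists_mem_bdryArc (hγ : Crossing H γ s t x₀ e f y₀) (h : ConformalDisk H)
    (hgap : IsGap x₀ e f y₀) (hn : n₁ < n₂)
    (hjump : ¬HasJump H γ s t (BadJump x₀ e n₁ n₂ f y₀)) (ha : s ≤ a) (hab : a ≤ b) (hb : b ≤ t)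
    (haγ : γ a ∈ bdryArc H x₀ n₁) (hbγ : γ b ∈ bdryArc H n₂ y₀) :
    ∃ x ∈ Icc a b, γ x ∈ bdryArc H n₁ n₂ := by
  by_contra! hN
  obtain ⟨s', t', α, β, has, hst, htb, hfree, hαγ, hβγ, hα, hβ⟩ :=
    hγ.exists_jump_over h hgap hn ha hab hb haγ hbγ hN
  by_cases hfull : α ≤ e ∧ f ≤ β
  · have hs : s' = s := by
      by_contra hne
      exact hγ.notMem_bdryArc_left h hgap ⟨lt_of_le_of_ne' (ha.trans has) hne, by linarith⟩
        (hαγ ▸ bdryPt_mem_bdryArc ⟨hα.1, hfull.1⟩)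
    have ht : t' = t := by
      by_contra hne
      exact hγ.notMem_bdryArc_right h hgap ⟨by linarith, (htb.trans hb).lt_of_ne hne⟩
        (hβγ ▸ bdryPt_mem_bdryArc ⟨hfull.2, hβ.2⟩)
    obtain ⟨x, hx, hxH⟩ := hγ.exists_visit
    exact hfree x (by rwa [hs, ht]) hxH
  · have hαβ : α < β := hα.2.trans (hn.trans hβ.1)
    exact hjump ⟨s', t', α, β, ha.trans has, hst, htb.trans hb, hfree, hαγ, hβγ,
      ⟨hα.1, hαβ.le.trans hβ.2⟩, ⟨hα.1.trans hαβ.le, hβ.2⟩, Or.inl ⟨hα.2, hβ.1, hfull⟩⟩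

lemma left_half (hγ : Crossing H γ s t x₀ e f y₀) (h : ConformalDisk H)
    (hgap : IsGap x₀ e f y₀) (he : e < n₁) (hn : n₁ < n₂) (hf : n₂ < f)
    (hjump : ¬HasJump H γ s t (BadJump x₀ e n₁ n₂ f y₀)) (hu : u ∈ Icc s t)
    (huγ : γ u ∈ bdryArc H n₁ n₂) (hfirst : ∀ x ∈ Ico s u, γ x ∉ bdryArc H n₁ n₂) :
    Crossing H γ s u x₀ e n₁ n₂ := by
  have hx₀ := hgap.le_left
  have hfy := hgap.right_le
  have hsu : s < u := hu.1.lt_of_ne fun hsu => disjoint_left.1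
    (h.disjoint_bdryArc he (by linarith [hgap.le_add_half])) hγ.left_mem (hsu ▸ huγ)
  refine ⟨hγ.isCurveOn.mono le_rfl hu.2, hsu, hγ.left_mem, huγ, fun x hx hxH => ?_, ?_⟩
  · obtain ⟨τ, hτ, hτγ⟩ := hγ.forall_visit x ⟨hx.1, hx.2.trans_le hu.2⟩ hxH
    refine ⟨τ, ⟨hτ.1, ?_⟩, hτγ⟩
    by_contra! hτn
    have hxN := hfirst x ⟨hx.1.le, hx.2⟩
    have hτ₂ : n₂ < τ := not_le.1 fun hτ₂ => hxN (hτγ ▸ bdryPt_mem_bdryArc ⟨hτn, hτ₂⟩)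
    obtain ⟨y, hy, hyN⟩ := hγ.exists_mem_bdryArc h hgap hn hjump le_rfl hx.1.le
      (hx.2.le.trans hu.2) (bdryArc_mono le_rfl he.le hγ.left_mem)
      (hτγ ▸ bdryPt_mem_bdryArc ⟨hτ₂.le, hτ.2.le.trans hfy⟩)
    exact hfirst y ⟨hy.1, hy.2.trans_lt hx.2⟩ hyN
  · by_contra! hfree
    obtain ⟨_, ⟨α, hα, rfl⟩, hαγ⟩ := hγ.left_mem
    obtain ⟨_, ⟨β, hβ, rfl⟩, hβγ⟩ := huγ
    exact hjump ⟨s, u, α, β, le_rfl, hsu, hu.2, hfree, hαγ.symm, hβγ.symm,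
      ⟨hα.1, by linarith [hα.2]⟩, ⟨by linarith [hβ.1], by linarith [hβ.2]⟩,
      Or.inr (Or.inl ⟨hα.2, hβ⟩)⟩

lemma right_half (hγ : Crossing H γ s t x₀ e f y₀) (h : ConformalDisk H)
    (hgap : IsGap x₀ e f y₀) (he : e < n₁) (hn : n₁ < n₂) (hf : n₂ < f)
    (hjump : ¬HasJump H γ s t (BadJump x₀ e n₁ n₂ f y₀)) (hu : u ∈ Icc s t)
    (huγ : γ u ∈ bdryArc H n₁ n₂) (hlast : ∀ x ∈ Ioc u t, γ x ∉ bdryArc H n₁ n₂) :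
    Crossing H γ u t n₁ n₂ f y₀ := by
  have hx₀ := hgap.le_left
  have hfy := hgap.right_le
  have hut : u < t := hu.2.lt_of_ne fun hut => disjoint_left.1
    (h.disjoint_bdryArc hf (by linarith [hgap.le_add_half])) huγ (hut ▸ hγ.right_mem)
  refine ⟨hγ.isCurveOn.mono hu.1 le_rfl, hut, huγ, hγ.right_mem, fun x hx hxH => ?_, ?_⟩
  · obtain ⟨τ, hτ, hτγ⟩ := hγ.forall_visit x ⟨hu.1.trans_lt hx.1, hx.2⟩ hxH
    refine ⟨τ, ⟨?_, hτ.2⟩, hτγ⟩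
    by_contra! hτn
    have hxN := hlast x ⟨hx.1, hx.2.le⟩
    have hτ₁ : τ < n₁ := not_le.1 fun hτ₁ => hxN (hτγ ▸ bdryPt_mem_bdryArc ⟨hτ₁, hτn⟩)
    obtain ⟨y, hy, hyN⟩ := hγ.exists_mem_bdryArc h hgap hn hjump (hu.1.trans hx.1.le) hx.2.le
      le_rfl (hτγ ▸ bdryPt_mem_bdryArc ⟨hx₀.trans hτ.1.le, hτ₁.le⟩)
      (bdryArc_mono hf.le le_rfl hγ.right_mem)
    exact hlast y ⟨hx.1.trans_le hy.1, hy.2⟩ hyN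
  · by_contra! hfree
    obtain ⟨_, ⟨α, hα, rfl⟩, hαγ⟩ := huγ
    obtain ⟨_, ⟨β, hβ, rfl⟩, hβγ⟩ := hγ.right_mem
    exact hjump ⟨u, t, α, β, hu.1, hut, le_rfl, hfree, hαγ.symm, hβγ.symm,
      ⟨by linarith [hα.1], by linarith [hα.2]⟩, ⟨by linarith [hβ.1], hβ.2⟩,
      Or.inr (Or.inr ⟨hα, hβ.1⟩)⟩

lemma split (hγ : Crossing H γ s t x₀ e f y₀) (h : ConformalDisk H)
    (hgap : IsGap x₀ e f y₀) (he : e < n₁) (hn : n₁ < n₂) (hf : n₂ < f)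
    (hjump : ¬HasJump H γ s t (BadJump x₀ e n₁ n₂ f y₀)) :
    ∃ u v, u ≤ v ∧ Crossing H γ s u x₀ e n₁ n₂ ∧ Crossing H γ v t n₁ n₂ f y₀ := by
  have hcompact : IsCompact (Icc s t ∩ γ ⁻¹' bdryArc H n₁ n₂) :=
    isCompact_Icc.of_isClosed_subset (hγ.isCurveOn.1.preimage_isClosed_of_isClosed isClosed_Icc
      (h.isCompact_bdryArc n₁ n₂).isClosed) inter_subset_left
  have hvisit := hγ.exists_mem_bdryArc h hgap hn hjump le_rfl hγ.lt.le le_rfl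
    (bdryArc_mono le_rfl he.le hγ.left_mem) (bdryArc_mono hf.le le_rfl hγ.right_mem)
  obtain ⟨u, ⟨hu, huN⟩, hmin⟩ := hcompact.exists_isLeast hvisit
  obtain ⟨v, ⟨hv, hvN⟩, hmax⟩ := hcompact.exists_isGreatest hvisit
  refine ⟨u, v, hmin ⟨hv, hvN⟩,
    hγ.left_half h hgap he hn hf hjump hu huN fun x hx hxN => ?_,
    hγ.right_half h hgap he hn hf hjump hv hvN fun x hx hxN => ?_⟩
  · exact hx.2.not_ge (hmin ⟨⟨hx.1, hx.2.le.trans hu.2⟩, hxN⟩)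
  · exact hx.1.not_ge (hmax ⟨⟨hv.1.trans hx.1.le, hx.2⟩, hxN⟩)

end Crossing

/-! ### Blocking all crossings -/

/-- The metrics `ρ` and `Λ` block together the crossings of the gap `[e, f]` by curves with distant
ends. The error term `Λ` deals with crossings which stay close to the boundary point they visit;
as its bounds survive averaging, there is no need to control it on subintervals. -/
structure IsBlocking (H : ℂ → ℂ) (r : ℝ) (B : ℝ≥0∞) (x₀ e f y₀ : ℝ) (ρ Λ : ℂ → ℝ≥0∞) :
    Prop where
  measurable : Measurable ρ
  metricArea_le : metricArea ρ ≤ 2 * B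
  measurable_error : Measurable Λ
  error_le : ∀ z, Λ z ≤ ENNReal.ofReal r⁻¹
  lintegral_error_le : ∫⁻ z, Λ z ≤ ENNReal.ofReal (16 * r)
  one_le : ∀ (γ : ℝ → ℂ) (s t : ℝ), IsCurveOn γ 0 1 → 4 * r ≤ ‖γ 1 - γ 0‖ → 0 ≤ s → t ≤ 1 →
    Crossing H γ s t x₀ e f y₀ → 1 ≤ metricLength ρ γ s t + metricLength Λ γ 0 1

section Blocking

variable {H : ℂ → ℂ} {r κ E F x₀ e n₁ n₂ f y₀ η : ℝ} {B B' : ℝ≥0∞} {ρ Λ ρ₁ ρ₂ ρ₃ Λ₁ Λ₂ : ℂ → ℝ≥0∞}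

lemma IsBlocking.metricArea_error_le (h : IsBlocking H r B x₀ e f y₀ ρ Λ) (hr : 0 < r) :
    metricArea Λ ≤ 16 := by
  calc metricArea Λ ≤ ∫⁻ z, ENNReal.ofReal r⁻¹ * Λ z :=
        lintegral_mono fun z => (sq (Λ z)).trans_le (mul_le_mul_left (h.error_le z) _)
    _ = ENNReal.ofReal r⁻¹ * ∫⁻ z, Λ z := lintegral_const_mul _ h.measurable_error
    _ ≤ ENNReal.ofReal r⁻¹ * ENNReal.ofReal (16 * r) := by gcongr; exact h.lintegral_error_le
    _ = 16 := by
      rw [← ENNReal.ofReal_mul (inv_pos.2 hr).le, mul_left_comm, inv_mul_cancel₀ hr.ne', mul_one,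
        ENNReal.ofReal_ofNat]

lemma exists_le_norm_sub {γ : ℝ → ℂ} (hγ : 2 * r ≤ ‖γ 1 - γ 0‖) (x : ℝ) :
    ∃ τ ∈ Icc (0 : ℝ) 1, r ≤ ‖γ τ - γ x‖ := by
  by_contra! hnear
  have h0 := hnear 0 (left_mem_Icc.2 zero_le_one)
  have h1 := hnear 1 (right_mem_Icc.2 zero_le_one)
  rw [norm_sub_rev] at h0
  linarith [norm_sub_le_norm_sub_add_norm_sub (γ 1) (γ x) (γ 0)]

lemma isBlocking_ball (hr : 0 < r) (hη : ∀ τ ∈ Icc e f, ‖bdryPt H τ - bdryPt H e‖ < r) :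
    IsBlocking H r B x₀ e f y₀ (fun _ => 0)
      ((ball (bdryPt H e) (2 * r)).indicator fun _ => ENNReal.ofReal r⁻¹) where
  measurable := measurable_const
  metricArea_le := by simp [metricArea]
  measurable_error := measurable_const.indicator measurableSet_ball
  error_le := indicator_le_self' fun _ _ => zero_le
  lintegral_error_le := by
    rw [lintegral_indicator measurableSet_ball, setLIntegral_const,
      volume_ball_eq_ofReal _ (by positivity), ← ENNReal.ofReal_mul (inv_pos.2 hr).le]
    refine ENNReal.ofReal_le_ofReal ?_
    calc r⁻¹ * (Real.pi * (2 * r) ^ 2) = 4 * Real.pi * r := by field_simp; norm_num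
      _ ≤ 16 * r := by nlinarith [Real.pi_le_four]
  one_le γ s t hγ hfar hs ht hcross := by
    obtain ⟨x, hx, hxH⟩ := hcross.exists_visit
    obtain ⟨τ, hτ, hτγ⟩ := hcross.forall_visit x hx hxH
    have hclose := hτγ ▸ hη τ (Ioo_subset_Icc_self hτ)
    obtain ⟨τ', hτ', hτ'γ⟩ := exists_le_norm_sub (r := r) (by linarith) x
    refine le_add_left ?_
    have hone : ENNReal.ofReal r⁻¹ * ENNReal.ofReal r = 1 := by
      rw [← ENNReal.ofReal_mul (inv_pos.2 hr).le, inv_mul_cancel₀ hr.ne', ENNReal.ofReal_one]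
    refine hone.ge.trans (hγ.mul_le_metricLength_of_dist
      ⟨hs.trans hx.1.le, hx.2.le.trans ht⟩ hτ' hτ'γ fun y _ hy => ?_)
    have hyball : γ y ∈ ball (bdryPt H e) (2 * r) := by
      rw [mem_ball, dist_eq_norm]
      linarith [norm_sub_le_norm_sub_add_norm_sub (γ y) (γ x) (bdryPt H e)]
    rw [indicator_of_mem hyball]

lemma inv_two_mul_add_inv_two_mul (b : ℝ≥0∞) : 2⁻¹ * b + 2⁻¹ * b = b := by
  rw [← add_mul, ENNReal.inv_two_add_inv_two, one_mul]

lemma metricArea_max_max_half_le (hρ₁ : Measurable ρ₁) (hρ₂ : Measurable ρ₂)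
    (h₁ : metricArea ρ₁ ≤ B) (h₂ : metricArea ρ₂ ≤ 2 * B) (h₃ : metricArea ρ₃ ≤ 2 * B) :
    metricArea (fun z => max (ρ₁ z) (max (2⁻¹ * ρ₂ z) (2⁻¹ * ρ₃ z))) ≤ 2 * B := by
  have htwo : (2⁻¹ : ℝ≥0∞) ≠ ⊤ := by simp
  have hhalf {ρ : ℂ → ℝ≥0∞} (hρ : metricArea ρ ≤ 2 * B) :
      metricArea (fun z => 2⁻¹ * ρ z) ≤ 2⁻¹ * B := by
    rw [metricArea_const_mul htwo]
    calc 2⁻¹ ^ 2 * metricArea ρ ≤ 2⁻¹ ^ 2 * (2 * B) := by gcongr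
      _ = (2⁻¹ * 2) * (2⁻¹ * B) := by ring
      _ = 2⁻¹ * B := by rw [ENNReal.inv_mul_cancel two_ne_zero (by simp), one_mul]
  calc _ ≤ metricArea ρ₁ + (metricArea (fun z => 2⁻¹ * ρ₂ z) + metricArea fun z => 2⁻¹ * ρ₃ z) :=
        (metricArea_max_le hρ₁).trans (by gcongr; exact metricArea_max_le (hρ₂.const_mul _))
    _ ≤ B + (2⁻¹ * B + 2⁻¹ * B) := by gcongr; exacts [hhalf h₂, hhalf h₃]
    _ = 2 * B := by rw [inv_two_mul_add_inv_two_mul, two_mul]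

/-- A crossing without bad jumps contains two disjoint crossings of the two remaining gaps, so that
half of each of their metrics is enough. -/
lemma IsBlocking.merge (h : ConformalDisk H) (hgap : IsGap x₀ e f y₀) (he : e < n₁) (hn : n₁ < n₂)
    (hf : n₂ < f) (hρ : Measurable ρ) (harea : metricArea ρ ≤ B)
    (hadm : Admissible ρ (jumpFamily H (diskBdry H)ᶜ (BadJump x₀ e n₁ n₂ f y₀)))
    (h₁ : IsBlocking H r B x₀ e n₁ n₂ ρ₁ Λ₁) (h₂ : IsBlocking H r B n₁ n₂ f y₀ ρ₂ Λ₂) :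
    IsBlocking H r B x₀ e f y₀ (fun z => max (ρ z) (max (2⁻¹ * ρ₁ z) (2⁻¹ * ρ₂ z)))
      (fun z => 2⁻¹ * Λ₁ z + 2⁻¹ * Λ₂ z) where
  measurable := hρ.max ((h₁.measurable.const_mul _).max (h₂.measurable.const_mul _))
  metricArea_le := metricArea_max_max_half_le hρ h₁.measurable harea h₁.metricArea_le
    h₂.metricArea_le
  measurable_error := (h₁.measurable_error.const_mul _).add (h₂.measurable_error.const_mul _)
  error_le z := (add_le_add (mul_le_mul_right (h₁.error_le z) _)
    (mul_le_mul_right (h₂.error_le z) _)).trans_eq (inv_two_mul_add_inv_two_mul _)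
  lintegral_error_le := by
    rw [lintegral_add_left (h₁.measurable_error.const_mul _),
      lintegral_const_mul _ h₁.measurable_error, lintegral_const_mul _ h₂.measurable_error]
    exact (add_le_add (mul_le_mul_right h₁.lintegral_error_le _)
      (mul_le_mul_right h₂.lintegral_error_le _)).trans_eq (inv_two_mul_add_inv_two_mul _)
  one_le γ s t hγ hfar hs ht hcross := by
    set ρ' : ℂ → ℝ≥0∞ := fun z => max (ρ z) (max (2⁻¹ * ρ₁ z) (2⁻¹ * ρ₂ z))
    by_cases hjump : HasJump H γ s t (BadJump x₀ e n₁ n₂ f y₀)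
    · exact le_add_right ((hadm.one_le_metricLength_of_hasJump hcross.isCurveOn hjump).trans
        (metricLength_mono fun z => le_max_left _ _))
    obtain ⟨u, v, huv, hleft, hright⟩ := hcross.split h hgap he hn hf hjump
    have htwo : (2⁻¹ : ℝ≥0∞) ≠ ⊤ := by simp
    have hleft' := h₁.one_le γ s u hγ hfar hs (huv.trans (hright.lt.le.trans ht)) hleft
    have hright' := h₂.one_le γ v t hγ hfar (hs.trans (hleft.lt.le.trans huv)) ht hright
    have hlen₁ : 2⁻¹ * metricLength ρ₁ γ s u ≤ metricLength ρ' γ s u :=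
      (metricLength_const_mul htwo).ge.trans
        (metricLength_mono fun z => le_max_of_le_right (le_max_left _ _))
    have hlen₂ : 2⁻¹ * metricLength ρ₂ γ v t ≤ metricLength ρ' γ u t :=
      (metricLength_const_mul htwo).ge.trans ((metricLength_mono fun z =>
        le_max_of_le_right (le_max_right _ _)).trans (metricLength_mono_interval huv le_rfl))
    have hlen := metricLength_add_le (ρ := ρ') (γ := γ) hleft.lt.le (huv.trans hright.lt.le)
    calc (1 : ℝ≥0∞) = 2⁻¹ * 1 + 2⁻¹ * 1 := (inv_two_mul_add_inv_two_mul 1).symm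
      _ ≤ 2⁻¹ * (metricLength ρ₁ γ s u + metricLength Λ₁ γ 0 1) +
            2⁻¹ * (metricLength ρ₂ γ v t + metricLength Λ₂ γ 0 1) := by gcongr
      _ = (2⁻¹ * metricLength ρ₁ γ s u + 2⁻¹ * metricLength ρ₂ γ v t) +
            (2⁻¹ * metricLength Λ₁ γ 0 1 + 2⁻¹ * metricLength Λ₂ γ 0 1) := by ring
      _ ≤ _ := add_le_add ((add_le_add hlen₁ hlen₂).trans hlen)
            (mul_metricLength_add_mul_metricLength_le _ _)

lemma Splittable.exists_isBlocking (h : ConformalDisk H) (hsplit : Splittable H κ E F B')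
    (hB : B' < B) (hκ : 0 < κ) (hκ1 : κ ≤ 1) (hr : 0 < r)
    (hη : ∀ α β, |α - β| ≤ η → ‖bdryPt H α - bdryPt H β‖ < r) (m : ℕ) :
    ∀ {x₀ e f y₀ : ℝ}, IsGap x₀ e f y₀ → E ≤ e → f ≤ F → (f - e) * (1 - κ) ^ m ≤ η →
      ∃ ρ Λ, IsBlocking H r B x₀ e f y₀ ρ Λ := by
  induction m with
  | zero =>
    intro x₀ e f y₀ _ _ _ hlen
    rw [pow_zero, mul_one] at hlen
    refine ⟨_, _, isBlocking_ball hr fun τ hτ => hη τ e ?_⟩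
    rw [abs_of_nonneg (sub_nonneg.2 hτ.1)]
    linarith [hτ.2]
  | succ m ih =>
    intro x₀ e f y₀ hgap hE hF hlen
    obtain ⟨n₁, n₂, hn₁, hn, hn₂, hbad⟩ := hsplit x₀ e f y₀ hgap hE hF
    obtain ⟨ρ, hρ, hadm, harea⟩ := exists_metric_of_extremalWidth_lt (hbad.trans_lt hB)
    obtain ⟨hx₀, hef, hfy, hy₀⟩ := hgap
    have hκef : 0 < κ * (f - e) := mul_pos hκ (sub_pos.2 hef)
    have hshort {q : ℝ} (hq : q ≤ (f - e) * (1 - κ)) : q * (1 - κ) ^ m ≤ η :=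
      (mul_le_mul_of_nonneg_right hq (pow_nonneg (sub_nonneg.2 hκ1) m)).trans
        (by rwa [mul_assoc, ← pow_succ'])
    obtain ⟨ρ₁, Λ₁, h₁⟩ := ih (y₀ := n₂) ⟨hx₀, by linarith, hn.le, by linarith⟩ hE
      (by linarith : n₁ ≤ F) (hshort (by linarith))
    obtain ⟨ρ₂, Λ₂, h₂⟩ := ih (x₀ := n₁) ⟨hn.le, by linarith, hfy, by linarith⟩
      (by linarith : E ≤ n₂) hF (hshort (by linarith))
    exact ⟨_, _, h₁.merge h ⟨hx₀, hef, hfy, hy₀⟩ (by linarith) hn (by linarith) hρ harea.le hadm h₂⟩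

lemma ConformalDisk.exists_forall_norm_bdryPt_sub_lt (h : ConformalDisk H) (hr : 0 < r) :
    ∃ η > 0, ∀ α β, |α - β| ≤ η → ‖bdryPt H α - bdryPt H β‖ < r := by
  have huniform := (isCompact_closedBall (0 : ℂ) 1).uniformContinuousOn_of_continuous h.continuousOn
  obtain ⟨δ, hδ, hdist⟩ := Metric.uniformContinuousOn_iff.1 huniform r hr
  refine ⟨δ / (4 * Real.pi), by positivity, fun α β hαβ => ?_⟩
  rw [← dist_eq_norm]
  refine hdist _ (unitCirc_mem_closedBall α) _ (unitCirc_mem_closedBall β) ?_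
  rw [dist_eq_norm]
  calc _ ≤ 2 * Real.pi * |α - β| := norm_unitCirc_sub_le α β
    _ ≤ 2 * Real.pi * (δ / (4 * Real.pi)) := by gcongr
    _ = δ / 2 := by field_simp; norm_num
    _ < δ := half_lt_self hδ

lemma extremalWidth_le_of_one_le_add {F : Set (ℝ → ℂ)} {ρ ρ' : ℂ → ℝ≥0∞} (hρ : Measurable ρ)
    (hρ' : Measurable ρ') (h : ∀ γ ∈ F, 1 ≤ metricLength ρ γ 0 1 + metricLength ρ' γ 0 1) :
    extremalWidth F ≤ 4 * metricArea ρ + 4 * metricArea ρ' := by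
  have hadm : Admissible (fun z => max (2 * ρ z) (2 * ρ' z)) F := fun γ hγ => by
    have hlen {σ : ℂ → ℝ≥0∞} (hσ : ∀ z, 2 * σ z ≤ max (2 * ρ z) (2 * ρ' z)) :
        2 * metricLength σ γ 0 1 ≤ metricLength (fun z => max (2 * ρ z) (2 * ρ' z)) γ 0 1 :=
      (metricLength_const_mul ENNReal.ofNat_ne_top).ge.trans (metricLength_mono hσ)
    have h₁ := hlen fun z => le_max_left (2 * ρ z) _
    have h₂ := hlen fun z => le_max_right _ (2 * ρ' z)
    rw [two_mul] at h₁ h₂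
    rcases le_total (metricLength ρ γ 0 1) (metricLength ρ' γ 0 1) with hle | hle
    · exact (h γ hγ).trans ((add_le_add_left hle _).trans h₂)
    · exact (h γ hγ).trans ((add_le_add_right hle _).trans h₁)
  calc extremalWidth F ≤ metricArea fun z => max (2 * ρ z) (2 * ρ' z) :=
        extremalWidth_le_metricArea ((hρ.const_mul 2).max (hρ'.const_mul 2)) hadm
    _ ≤ 2 ^ 2 * metricArea ρ + 2 ^ 2 * metricArea ρ' := by
        rw [← metricArea_const_mul ENNReal.ofNat_ne_top,
          ← metricArea_const_mul ENNReal.ofNat_ne_top]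
        exact metricArea_max_le (hρ.const_mul 2)
    _ = 4 * metricArea ρ + 4 * metricArea ρ' := by norm_num

lemma Splittable.extremalWidth_crossing_le (h : ConformalDisk H) (hsplit : Splittable H κ e f B')
    (hB : B' < B) (hκ : 0 < κ) (hκ1 : κ ≤ 1) (hgap : IsGap x₀ e f y₀) :
    extremalWidth {γ | Crossing H γ 0 1 x₀ e f y₀} ≤ 8 * B + 64 := by
  have hef := sub_pos.2 hgap.lt
  obtain ⟨δ, hδ, hsep⟩ := exists_pos_forall_le_norm_sub (h.isCompact_bdryArc x₀ e)
    (h.isCompact_bdryArc f y₀).isClosed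
    (h.disjoint_bdryArc hgap.lt (by linarith [hgap.le_add_half]))
  have hr : 0 < δ / 4 := by positivity
  obtain ⟨η, hη, huniform⟩ := h.exists_forall_norm_bdryPt_sub_lt hr
  obtain ⟨m, hm⟩ := exists_pow_lt_of_lt_one (div_pos hη hef) (by linarith : 1 - κ < 1)
  rw [lt_div_iff₀' hef] at hm
  obtain ⟨ρ, Λ, hρΛ⟩ :=
    hsplit.exists_isBlocking h hB hκ hκ1 hr huniform m hgap le_rfl le_rfl hm.le
  calc _ ≤ 4 * metricArea ρ + 4 * metricArea Λ := extremalWidth_le_of_one_le_add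
        hρΛ.measurable hρΛ.measurable_error fun γ hγ => hρΛ.one_le γ 0 1 hγ.isCurveOn
          (by linarith [hsep _ hγ.left_mem _ hγ.right_mem]) le_rfl le_rfl hγ
    _ ≤ 4 * (2 * B) + 4 * 16 := by
        gcongr
        exacts [hρΛ.metricArea_le, hρΛ.metricArea_error_le hr]
    _ = 8 * B + 64 := by ring

end Blocking

/-! ### Submerged width and outer width -/

/-- The family `ℱ°_L(I, J)` of curves which may be submerged in the disk parametrized by `H`. -/
def submergedFamily (H : ℂ → ℂ) (I L J : Set ℂ) : Set (ℝ → ℂ) :=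
  {γ | IsCurve γ ∧ γ 0 ∈ I ∧ γ 1 ∈ J ∧
    (∃ ε > 0, ∀ t ∈ Ioo (0 : ℝ) ε, γ t ∉ diskImage H) ∧
    (∃ ε > 0, ∀ t ∈ Ioo (1 - ε) (1 : ℝ), γ t ∉ diskImage H) ∧
    ∀ t ∈ Ioo (0 : ℝ) 1, γ t ∉ I ∪ J ∪ (diskBdry H \ (I ∪ L ∪ J))}

/-- The outer width `W⁺_lam` of the boundary arc `[c - r, c + r]` of the disk parametrized by
`H`. -/
def outerWidth (H : ℂ → ℂ) (lam c r : ℝ) : ℝ≥0∞ :=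
  widthIn (diskImage H)ᶜ (bdryArc H (c - r) (c + r))
    (closure (diskBdry H \ bdryArc H (c - min (lam * (2 * r)) 1 / 2)
      (c + min (lam * (2 * r)) 1 / 2)))

section Trading

variable {H : ℂ → ℂ} {lam x₀ e f y₀ E F : ℝ} {M : ℝ≥0∞} {γ : ℝ → ℂ}

lemma Crossing.of_mem_submergedFamily (hxe : x₀ ≤ e) (hfy : f ≤ y₀)
    (hγ : γ ∈ submergedFamily H (bdryArc H x₀ e) (bdryArc H e f) (bdryArc H f y₀))
    (hvisit : ∃ t ∈ Ioo (0 : ℝ) 1, γ t ∈ diskBdry H) : Crossing H γ 0 1 x₀ e f y₀ := by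
  obtain ⟨hcurve, h0, h1, -, -, havoid⟩ := hγ
  refine ⟨hcurve, zero_lt_one, h0, h1, fun t ht hb => ?_, hvisit⟩
  have hnot := havoid t ht
  simp only [mem_union, mem_sdiff, hb, true_and, not_or, not_and_or, not_not] at hnot
  obtain ⟨⟨hleft, hright⟩, hmid⟩ := hnot
  obtain ⟨_, ⟨τ, hτ, rfl⟩, hτγ⟩ := (hmid.resolve_right hright).resolve_left hleft
  refine ⟨τ, ⟨hτ.1.lt_of_ne ?_, hτ.2.lt_of_ne ?_⟩, hτγ⟩
  · rintro rfl
    exact hleft (hτγ ▸ bdryPt_mem_bdryArc ⟨hxe, le_rfl⟩)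
  · rintro rfl
    exact hright (hτγ ▸ bdryPt_mem_bdryArc ⟨le_rfl, hfy⟩)

lemma ConformalDisk.submergedFamily_subset (h : ConformalDisk H) (hxe : x₀ ≤ e) (hfy : f ≤ y₀) :
    submergedFamily H (bdryArc H x₀ e) (bdryArc H e f) (bdryArc H f y₀) ⊆
      curveFamily (diskImage H)ᶜ (bdryArc H x₀ e) (bdryArc H f y₀) ∪
        {γ | Crossing H γ 0 1 x₀ e f y₀} := by
  intro γ hγ
  by_cases hvisit : ∃ t ∈ Ioo (0 : ℝ) 1, γ t ∈ diskBdry H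
  · exact Or.inr (.of_mem_submergedFamily hxe hfy hγ hvisit)
  obtain ⟨hcurve, h0, h1, ⟨ε, hε, hland⟩, -⟩ := hγ
  push Not at hvisit
  have hout : ∀ t ∈ Ioo (0 : ℝ) 1, γ t ∉ diskImage H := by
    refine (h.forall_mem_or_forall_notMem_diskImage (hcurve.1.mono Ioo_subset_Icc_self)
      hvisit).resolve_left fun hZ => ?_
    obtain ⟨t, ht0, ht⟩ := exists_between (lt_min hε zero_lt_one)
    exact hland t ⟨ht0, ht.trans_le (min_le_left _ _)⟩ (hZ t ⟨ht0, ht.trans_le (min_le_right _ _)⟩)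
  refine Or.inl ⟨hcurve, fun t ht => ?_, h0, h1⟩
  rcases ht.1.eq_or_lt with rfl | ht0
  · exact h.notMem_diskImage (bdryArc_subset_diskBdry h0)
  rcases ht.2.eq_or_lt with rfl | ht1
  · exact h.notMem_diskImage (bdryArc_subset_diskBdry h1)
  · exact hout t ⟨ht0, ht1⟩

lemma extremalWidth_submergedFamily_ne_top {I L J : Set ℂ} (hI : IsCompact I) (hJ : IsClosed J)
    (hIJ : Disjoint I J) :
    extremalWidth (submergedFamily H I L J) ≠ ∞ := by
  obtain ⟨δ, hδ, hsep⟩ := exists_pos_forall_le_norm_sub hI hJ hIJ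
  obtain ⟨R, hR, hball⟩ := hI.isBounded.subset_closedBall_lt 0 0
  exact ne_top_of_le_ne_top ENNReal.ofReal_ne_top <| extremalWidth_le_of_dist hR.le hδ
    fun γ ⟨hcurve, h0, h1, _⟩ =>
      ⟨hcurve, hball h0, 1, ⟨zero_le_one, le_rfl⟩, hsep _ h0 _ h1⟩

lemma ConformalDisk.thin_of_forall_outerWidth_le (h : ConformalDisk H)
    (hM : ∀ c r, 0 < r → E ≤ c - r → c + r ≤ F → outerWidth H lam c r ≤ M) :
    Thin H lam E F M := by
  intro u v hE huv hF
  refine le_trans (extremalWidth_mono ?_)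
    (hM ((u + v) / 2) ((v - u) / 2) (by linarith) (by linarith) (by linarith))
  intro γ hγ
  have hout := h.forall_notMem_diskImage hγ
  obtain ⟨hcurve, -, α, β, h0, h1, hα, hlong, hhalf⟩ := hγ
  have hmin : min (lam * (2 * ((v - u) / 2))) 1 / 2 = lam * (v - u) / 2 := by
    rw [mul_div_cancel₀ _ two_ne_zero, min_eq_left (by linarith)]
  refine ⟨hcurve, hout, ?_, subset_closure ⟨h1 ▸ bdryPt_mem_diskBdry β, ?_⟩⟩
  · exact h0 ▸ bdryPt_mem_bdryArc ⟨by linarith [hα.1], by linarith [hα.2]⟩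
  · have hβ := abs_le.1 hhalf
    rw [hmin, h1, h.bdryPt_mem_bdryArc_iff (by linarith) (by linarith)]
    exact fun hmem => hlong.not_ge (abs_le.2 ⟨by linarith [hmem.1], by linarith [hmem.2]⟩)

lemma exists_pow_three_le_two_pow (hlam : 2 < lam) :
    ∃ j : ℕ, 1 ≤ j ∧ lam ^ 3 ≤ 2 ^ j ∧ j ≤ 6 * Real.log lam := by
  have hlog2 := Real.log_two_gt_d9
  have hlog : Real.log 2 < Real.log lam := Real.log_lt_log two_pos hlam
  have hceil := Nat.ceil_lt_add_one
    (div_nonneg (by linarith) (by linarith) : 0 ≤ 3 * Real.log lam / Real.log 2)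
  refine ⟨⌈3 * Real.log lam / Real.log 2⌉₊, Nat.ceil_pos.2 ?_, ?_, ?_⟩
  · exact div_pos (by linarith) (by linarith)
  · rw [← Real.log_le_log_iff (by positivity) (by positivity), Real.log_pow, Real.log_pow,
      ← div_le_iff₀ (by linarith)]
    exact_mod_cast Nat.le_ceil _
  · have : 3 * Real.log lam / Real.log 2 ≤ 4.5 * Real.log lam := by
      rw [div_le_iff₀ (by linarith)]
      nlinarith
    linarith

lemma Thin.extremalWidth_crossing_le (h : ConformalDisk H) (hT : Thin H lam e f M) (hM : M ≠ ∞)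
    (hlam : 2 < lam) (hgap : IsGap x₀ e f y₀) :
    extremalWidth {γ | Crossing H γ 0 1 x₀ e f y₀} ≤
      32 * M + ENNReal.ofReal (26000 * Real.log lam) := by
  obtain ⟨j, hj1, hj, hjlog⟩ := exists_pow_three_le_two_pow hlam
  have hj1' : (1 : ℝ≥0∞) ≤ j := by exact_mod_cast hj1
  have hlt : 4 * M + 532 * j < 4 * M + 533 * j := by
    refine ENNReal.add_lt_add_left (ENNReal.mul_ne_top ENNReal.ofNat_ne_top hM) ?_
    exact_mod_cast Nat.mul_lt_mul_of_pos_right (by norm_num : 532 < 533) hj1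
  calc extremalWidth {γ | Crossing H γ 0 1 x₀ e f y₀}
      ≤ 8 * (4 * M + 533 * j) + 64 * 1 := by
        rw [mul_one]
        exact (hT.splittable h hlam hj).extremalWidth_crossing_le h hlt (by positivity)
          (inv_le_one_of_one_le₀ (one_le_pow₀ (by linarith))) hgap
    _ ≤ 8 * (4 * M + 533 * j) + 64 * j := by gcongr
    _ = 32 * M + ENNReal.ofReal (4328 * j) := by
        rw [ENNReal.ofReal_mul (by norm_num), ENNReal.ofReal_natCast, ENNReal.ofReal_ofNat]
        ring
    _ ≤ 32 * M + ENNReal.ofReal (26000 * Real.log lam) := by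
        gcongr 32 * M + ENNReal.ofReal ?_
        linarith

lemma le_two_mul_of_le_half_add {K x : ℝ≥0∞} (hK : K ≠ ∞) (hle : K ≤ 2⁻¹ * K + x) :
    K ≤ 2 * x := by
  have hhalf : 2⁻¹ * K ≤ x := by
    refine (ENNReal.add_le_add_iff_left (by finiteness : 2⁻¹ * K ≠ ∞)).1 ?_
    rwa [← add_mul, ENNReal.inv_two_add_inv_two, one_mul]
  rwa [← ENNReal.inv_mul_le_iff two_ne_zero ENNReal.ofNat_ne_top]

end Trading

theorem trading_into_outer_width_general :
    ∃ C c : ℝ, 0 < C ∧ 0 < c ∧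
      ∀ lam : ℝ, 2 < lam →
        ∀ H : ℂ → ℂ, ConformalDisk H →
          ∀ x₀ e f y₀ : ℝ, IsGap x₀ e f y₀ →
            ∀ K : ℝ≥0∞,
              K = extremalWidth
                    (submergedFamily H (bdryArc H x₀ e) (bdryArc H e f) (bdryArc H f y₀))
                  - widthIn (diskImage H)ᶜ (bdryArc H x₀ e) (bdryArc H f y₀) →
              ENNReal.ofReal (C * Real.log lam) ≤ K →
              ∃ c' r' : ℝ, 0 < r' ∧ e ≤ c' - r' ∧ c' + r' ≤ f ∧
                ENNReal.ofReal c * K ≤ outerWidth H lam c' r' := by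
  refine ⟨60000, 1 / 64, by norm_num, by norm_num, fun lam hlam H h x₀ e f y₀ hgap K hK hlog => ?_⟩
  by_contra! hthin
  have hpos : 0 < Real.log lam := Real.log_pos (by linarith)
  have hfin : K ≠ ∞ := hK ▸ ENNReal.sub_ne_top (extremalWidth_submergedFamily_ne_top
    (h.isCompact_bdryArc _ _) (h.isCompact_bdryArc _ _).isClosed
    (h.disjoint_bdryArc hgap.lt (by linarith [hgap.le_add_half])))
  have hcross : K ≤ 2⁻¹ * K + ENNReal.ofReal (26000 * Real.log lam) := by
    calc K ≤ extremalWidth {γ | Crossing H γ 0 1 x₀ e f y₀} := hK.trans_le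
          (tsub_le_iff_left.2 (extremalWidth_le_add
            (h.submergedFamily_subset hgap.le_left hgap.right_le)))
      _ ≤ 32 * (ENNReal.ofReal (1 / 64) * K) + ENNReal.ofReal (26000 * Real.log lam) :=
        Thin.extremalWidth_crossing_le h (h.thin_of_forall_outerWidth_le
          fun c' r' hr he hf => (hthin c' r' hr he hf).le) (by finiteness) hlam hgap
      _ = 2⁻¹ * K + ENNReal.ofReal (26000 * Real.log lam) := by
        rw [← mul_assoc, ← ENNReal.ofReal_ofNat 32, ← ENNReal.ofReal_mul (by norm_num),
          ← ENNReal.ofReal_ofNat 2, ← ENNReal.ofReal_inv_of_pos two_pos]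
        norm_num
  have hle := hlog.trans (le_two_mul_of_le_half_add hfin hcross)
  rw [← ENNReal.ofReal_ofNat 2, ← ENNReal.ofReal_mul zero_le_two,
    ENNReal.ofReal_le_ofReal_iff (by positivity)] at hle
  linarith

namespace SiegelData

variable {θ : ℝ} (S : SiegelData θ)

lemma conformalDisk : ConformalDisk S.H := ⟨S.contOn, S.injOn, S.holo⟩

lemma diskImage_eq : diskImage S.H = siegelDisk θ := S.image_ball

lemma diskBdry_eq : diskBdry S.H = bdryZ θ := by
  rw [bdryZ, ← S.image_closedBall, ← S.diskImage_eq, image_closedBall_eq_union, union_sdiff_left,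
    (disjoint_left.2 fun _ => S.conformalDisk.notMem_diskImage).sdiff_eq_left]

lemma submergedFamily_eq (I L J : Set ℂ) : submergedFamily S.H I L J = circFam θ I L J := by
  rw [submergedFamily, circFam, S.diskImage_eq, S.diskBdry_eq]

lemma outerWidth_eq (lam c r : ℝ) : outerWidth S.H lam c r = wPlusLam θ S lam c r := by
  rw [outerWidth, S.diskImage_eq, S.diskBdry_eq]
  rfl

end SiegelData

/-- **Trading submerged width into outer width** (corollary to the Snake Lemma). -/
theorem trading_into_outer_width :
    ∃ C c : ℝ, 0 < C ∧ 0 < c ∧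
      ∀ lam : ℝ, 2 < lam →
        ∀ θ : ℝ, BoundedType θ →
          ∀ (S : SiegelData θ) (s a l b : ℝ),
            0 < a → 0 < l → 0 < b → a + l + b ≤ 1 / 2 →
            ∀ K : ℝ≥0∞,
              K = circWidth θ (arcOn θ S s (s + a)) (arcOn θ S (s + a) (s + a + l))
                    (arcOn θ S (s + a + l) (s + a + l + b))
                  - wPlus θ (arcOn θ S s (s + a)) (arcOn θ S (s + a + l) (s + a + l + b)) →
              ENNReal.ofReal (C * Real.log lam) ≤ K →
              ∃ c' r' : ℝ, 0 < r' ∧ s + a ≤ c' - r' ∧ c' + r' ≤ s + a + l ∧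
                ENNReal.ofReal c * K ≤ wPlusLam θ S lam c' r' := by
  obtain ⟨C, c, hC, hc, htrade⟩ := trading_into_outer_width_general
  refine ⟨C, c, hC, hc, fun lam hlam θ _ S s a l b ha hl hb hsum K hK hlog => ?_⟩
  simp only [← S.outerWidth_eq]
  refine htrade lam hlam S.H S.conformalDisk s (s + a) (s + a + l) (s + a + l + b)
    ⟨by linarith, by linarith, by linarith, by linarith⟩ K ?_ hlog
  rw [S.submergedFamily_eq, S.diskImage_eq]
  exact hK
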